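/- Let (X_i)_{i∈ℤ} be a stationary ergodic process over a finite alphabet 𝕏 with entropy rate h. For any ε > 0 and any sequence of sample sizes n(k) ≥ 2^{k(h+ε)}, almost surely liminf_{k→∞} H(k, X_1^{n(k)})/k ≥ h. -/

import Mathlib

open MeasureTheory Filter Real

variable {𝕏 : Type*} [Fintype 𝕏] [Nonempty 𝕏] [DecidableEq 𝕏]
  [MeasurableSpace 𝕏] [MeasurableSingletonClass 𝕏]

/-- The left shift on two-sided sequences: `(shift ω) i = ω (i + 1)`. -/
def shift (ω : ℤ → 𝕏) : ℤ → 𝕏 := fun i => ω (i + 1)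

/-- The block `X_{s+1}^{s+l}` of a sequence `ω`, as a tuple in `𝕏^l`. -/
def blk (s l : ℕ) (ω : ℤ → 𝕏) : Fin l → 𝕏 := fun i => ω ((s : ℤ) + 1 + (i : ℤ))

/-- Shannon entropy (base 2) of a distribution `p` on a finite set:
`H(p) = -∑_{w : p w > 0} p w * log₂ (p w)` (`logb 2 0 = 0`, so zero-mass
points contribute nothing). -/
noncomputable def Hent {A : Type*} [Fintype A] (p : A → ℝ) : ℝ :=
  -∑ w, p w * Real.logb 2 (p w)

/-- Empirical nonoverlapping-block distribution
`p_k(w, x_1^n) = ⌊n/k⌋⁻¹ ∑_{i=1}^{⌊n/k⌋} 1[x_{(i-1)k+1}^{ik} = w]`. -/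
noncomputable def empDist (k n : ℕ) (ω : ℤ → 𝕏) : (Fin k → 𝕏) → ℝ :=
  fun w => (∑ i ∈ Finset.range (n / k), if blk (i * k) k ω = w then (1 : ℝ) else 0) / (n / k : ℕ)

/-- Plug-in estimator `H(k, x_1^n)` of the block entropy. -/
noncomputable def plugIn (k n : ℕ) (ω : ℤ → 𝕏) : ℝ := Hent (empDist k n ω)

/-- True block distribution `p_k(w) = P(X_1^k = w)`. -/
noncomputable def pblock (μ : Measure (ℤ → 𝕏)) (k : ℕ) : (Fin k → 𝕏) → ℝ :=
  fun w => (μ {ω | blk 0 k ω = w}).toReal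

/-- Block entropy `H(k) = H(p_k)`. -/
noncomputable def Hblock (μ : Measure (ℤ → 𝕏)) (k : ℕ) : ℝ := Hent (pblock μ k)

/-- Number `D(k, x_1^n)` of distinct nonoverlapping `k`-blocks in `x_1^n`. -/
noncomputable def Dcount (k n : ℕ) (ω : ℤ → 𝕏) : ℕ :=
  Set.ncard {w : Fin k → 𝕏 | ∃ i < n / k, blk (i * k) k ω = w}

/-- Length bound `K(k, x_1^n)` of the modified `k`-block code:
`K(k,x_1^n) = 2 log₂ k + (n/k)(H(k,x_1^n) + 2) + 3 k log₂|𝕏| (D(k,x_1^n) + 1)`. -/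
noncomputable def Kcode (k n : ℕ) (ω : ℤ → 𝕏) : ℝ :=
  2 * Real.logb 2 k + ((n : ℝ) / k) * (plugIn k n ω + 2)
    + 3 * k * Real.logb 2 (Fintype.card 𝕏) * (Dcount k n ω + 1)

/-- Conditional probability `P(X_1^k = w | ℐ)` given the shift-invariant
σ-algebra `ℐ`, as a function of the sample point. -/
noncomputable def condP (μ : Measure (ℤ → 𝕏)) (k : ℕ) (w : Fin k → 𝕏) : (ℤ → 𝕏) → ℝ :=
  μ[Set.indicator {ω | blk 0 k ω = w} (fun _ => (1 : ℝ)) | MeasurableSpace.invariants shift]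

/-- Conditional block entropy `H(X_1^k | ℐ) = E[-log₂ P(X_1^k = w | ℐ)|_{w = X_1^k}]`. -/
noncomputable def condH (μ : Measure (ℤ → 𝕏)) (k : ℕ) : ℝ :=
  ∫ ω, -Real.logb 2 (condP μ k (blk 0 k ω) ω) ∂μ

/-- `σ(y) = min(2^y, 1)`. -/
noncomputable def sigmaFn (y : ℝ) : ℝ := min ((2 : ℝ) ^ y) 1

/-- Negative part `x⁻ = -x · 1[x < 0]`. -/
noncomputable def nPart (x : ℝ) : ℝ := if x < 0 then -x else 0


set_option linter.unusedSectionVars false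

section BirkhoffPart

variable {α : Type*} [MeasurableSpace α] {ν : Measure α} [IsProbabilityMeasure ν] {T : α → α}

/-- Running maximum of Birkhoff sums. -/
noncomputable def garM (T : α → α) (φ : α → ℝ) : ℕ → α → ℝ
  | 0 => fun _ => 0
  | (n+1) => fun x => max 0 (φ x + garM T φ n (T x))

theorem garM_nonneg (φ : α → ℝ) (n : ℕ) (x : α) : 0 ≤ garM T φ n x := by
  cases n with
  | zero => exact le_rfl
  | succ n => exact le_max_left _ _

theorem garM_mono (φ : α → ℝ) (n : ℕ) : ∀ x : α, garM T φ n x ≤ garM T φ (n+1) x := by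
  induction n with
  | zero => intro x; exact garM_nonneg φ 1 x
  | succ n ih =>
    intro x
    exact max_le_max le_rfl (by linarith [ih (T x)])

theorem sum_le_garM (φ : α → ℝ) (n : ℕ) : ∀ x : α, birkhoffSum T φ n x ≤ garM T φ n x := by
  induction n with
  | zero => intro x; simp [garM]
  | succ n ih =>
    intro x
    rw [birkhoffSum_succ']
    exact le_trans (by linarith [ih (T x)]) (le_max_right _ _)

theorem garM_meas (hT : Measurable T) {φ : α → ℝ} (hφ : Measurable φ) (n : ℕ) :
    Measurable (garM T φ n) := by
  induction n with
  | zero => exact measurable_const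
  | succ n ih => exact measurable_const.max (hφ.add (ih.comp hT))

theorem garM_le {φ : α → ℝ} {C : ℝ} (hC : 0 ≤ C) (hb : ∀ x, |φ x| ≤ C) (n : ℕ) :
    ∀ x : α, garM T φ n x ≤ n * C := by
  induction n with
  | zero => intro x; simp [garM]
  | succ n ih =>
    intro x
    have h1 := ih (T x)
    have h2 := (abs_le.1 (hb x)).2
    refine max_le (by positivity) ?_
    push_cast; linarith

theorem integrable_of_bdd {f : α → ℝ} (hf : Measurable f) {C : ℝ} (hb : ∀ x, |f x| ≤ C) :
    Integrable f ν :=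
  Integrable.of_bound hf.aestronglyMeasurable C (Eventually.of_forall hb)

theorem max_ergodic (hT : MeasurePreserving T ν ν) {φ : α → ℝ} (hφ : Measurable φ) {C : ℝ}
    (hC : 0 ≤ C) (hb : ∀ x, |φ x| ≤ C) (n : ℕ) :
    0 ≤ ∫ x, {x | 0 < garM T φ (n+1) x}.indicator φ x ∂ν := by
  have hM := garM_meas hT.measurable hφ (n+1)
  have hMi : Integrable (garM T φ (n+1)) ν :=
    integrable_of_bdd hM (C := (n+1 : ℕ) * C) (fun x => by
      rw [abs_of_nonneg (garM_nonneg φ _ x)]; exact garM_le hC hb _ x)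
  have hMTi : Integrable (fun x => garM T φ (n+1) (T x)) ν := hT.integrable_comp_of_integrable hMi
  have hset : MeasurableSet {x | 0 < garM T φ (n+1) x} := measurableSet_lt measurable_const hM
  have h1 : ∫ x, (garM T φ (n+1) x - garM T φ (n+1) (T x)) ∂ν
      ≤ ∫ x, {x | 0 < garM T φ (n+1) x}.indicator φ x ∂ν := by
    refine integral_mono (hMi.sub hMTi) ((integrable_of_bdd hφ hb).indicator hset) ?_
    intro x
    simp only [Set.indicator, Set.mem_ofPred_eq]
    split_ifs with h
    · have h2 : garM T φ (n+1) x = max 0 (φ x + garM T φ n (T x)) := rfl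
      have h3 := garM_mono (T := T) φ n (T x)
      rcases max_choice 0 (φ x + garM T φ n (T x)) with h4 | h4
      · rw [h2, h4] at h; exact absurd h (lt_irrefl _)
      · rw [h2, h4]; linarith
    · have := garM_nonneg (T := T) φ (n+1) (T x)
      linarith
  rw [integral_sub hMi hMTi] at h1
  have h5 : ∫ x, garM T φ (n+1) (T x) ∂ν = ∫ x, garM T φ (n+1) x ∂ν := by
    have := integral_map (μ := ν) hT.measurable.aemeasurable (f := garM T φ (n+1))
      hM.aestronglyMeasurable
    rw [hT.map_eq] at this
    exact this.symm
  linarith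

theorem birk_bdd (hT : Ergodic T ν) {φ : α → ℝ} (hφ : Measurable φ) {C : ℝ}
    (hC : 0 ≤ C) (hb : ∀ x, |φ x| ≤ C) (hneg : ∫ x, φ x ∂ν < 0) :
    ∀ᵐ x ∂ν, ∃ D : ℝ, ∀ n, birkhoffSum T φ n x ≤ D := by
  have hmono : ∀ x, Monotone (fun n => garM T φ n x) := fun x =>
    monotone_nat_of_le_succ (fun n => garM_mono φ n x)
  set E : Set α := {x | ∀ D : ℕ, ∃ n, (D : ℝ) < garM T φ n x} with hE
  have hEm : MeasurableSet E := by
    have : E = ⋂ D : ℕ, ⋃ n, {x | (D : ℝ) < garM T φ n x} := by ext; simp [hE]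
    rw [this]
    exact MeasurableSet.iInter fun D => MeasurableSet.iUnion fun n =>
      measurableSet_lt measurable_const (garM_meas hT.measurable hφ n)
  have hEi : T ⁻¹' E = E := by
    ext x
    simp only [hE, Set.mem_preimage, Set.mem_ofPred_eq]
    constructor
    · intro h D
      obtain ⟨D', hD'⟩ := exists_nat_ge ((D : ℝ) - φ x)
      obtain ⟨n, hn⟩ := h D'
      refine ⟨n+1, lt_of_lt_of_le ?_ (le_max_right _ _)⟩
      linarith
    · intro h D
      obtain ⟨D', hD'⟩ := exists_nat_ge (max ((D : ℝ) + φ x) 0)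
      obtain ⟨n, hn⟩ := h D'
      have h0 := le_trans (le_max_right _ _) hD'
      have h1 := le_trans (le_max_left _ _) hD'
      cases n with
      | zero => simp only [garM] at hn; linarith
      | succ n =>
        refine ⟨n, ?_⟩
        simp only [garM] at hn
        rcases lt_max_iff.1 hn with h2 | h2 <;> linarith
  rcases hT.toPreErgodic.ae_mem_or_ae_notMem hEm hEi with h | h
  · exfalso
    have hlim : Tendsto (fun n => ∫ x, {x | 0 < garM T φ (n+1) x}.indicator φ x ∂ν) atTop
        (nhds (∫ x, φ x ∂ν)) := by
      refine tendsto_integral_of_dominated_convergence (fun _ => C) ?_ (integrable_const _) ?_ ?_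
      · intro n
        exact (hφ.indicator (measurableSet_lt measurable_const
          (garM_meas hT.measurable hφ (n+1)))).aestronglyMeasurable
      · intro n
        refine Eventually.of_forall fun x => ?_
        simp only [Set.indicator, Real.norm_eq_abs]
        split_ifs
        · exact hb x
        · simpa using hC
      · filter_upwards [h] with x hx
        obtain ⟨n, hn⟩ := hx 0
        refine tendsto_const_nhds.congr' ?_
        filter_upwards [eventually_ge_atTop n] with k hk
        have : 0 < garM T φ (k+1) x := by
          have := hmono x (show n ≤ k+1 by omega)
          simp only at this
          push_cast at hn
          linarith
        simp [Set.indicator, this]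
    have := ge_of_tendsto' hlim (fun n => max_ergodic hT.toMeasurePreserving hφ hC hb n)
    linarith
  · filter_upwards [h] with x hx
    simp only [hE, Set.mem_ofPred_eq, not_forall, not_exists, not_lt] at hx
    obtain ⟨D, hD⟩ := hx
    exact ⟨D, fun n => (sum_le_garM φ n x).trans (hD n)⟩

theorem birk_upper (hT : Ergodic T ν) {f : α → ℝ} (hf : Measurable f) {C : ℝ}
    (hb : ∀ x, |f x| ≤ C) {c : ℝ} (hc : ∫ x, f x ∂ν < c) :
    ∀ᵐ x ∂ν, ∀ᶠ n : ℕ in atTop, birkhoffSum T f n x ≤ n * c := by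
  obtain ⟨c', h1, h2⟩ := exists_between hc
  have hfi : Integrable f ν := integrable_of_bdd hf hb
  have key := birk_bdd hT (φ := fun x => f x - c') (hf.sub measurable_const)
    (C := |C| + |c'|) (by positivity)
    (fun x => (abs_sub _ _).trans (by linarith [hb x, le_abs_self C]))
    (by rw [integral_sub hfi (integrable_const _)]; simp; linarith)
  filter_upwards [key] with x hx
  obtain ⟨D, hD⟩ := hx
  obtain ⟨N, hN⟩ := exists_nat_ge (D / (c - c'))
  filter_upwards [eventually_ge_atTop N] with n hn
  have h3 := hD n
  have h4 : birkhoffSum T (fun x => f x - c') n x = birkhoffSum T f n x - n * c' := by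
    simp [birkhoffSum, Finset.sum_sub_distrib]
  rw [h4] at h3
  have h5 : D ≤ N * (c - c') := (div_le_iff₀ (by linarith)).1 hN
  have h6 : (N : ℝ) * (c - c') ≤ n * (c - c') :=
    mul_le_mul_of_nonneg_right (by exact_mod_cast hn) (by linarith)
  linarith

theorem birk_lower (hT : Ergodic T ν) {f : α → ℝ} (hf : Measurable f) {C : ℝ}
    (hb : ∀ x, |f x| ≤ C) {c : ℝ} (hc : c < ∫ x, f x ∂ν) :
    ∀ᵐ x ∂ν, ∀ᶠ n : ℕ in atTop, n * c ≤ birkhoffSum T f n x := by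
  have := birk_upper hT (f := fun x => - f x) hf.neg (C := C) (by simpa using hb) (c := -c)
    (by rw [integral_neg]; linarith)
  filter_upwards [this] with x hx
  filter_upwards [hx] with n hn
  have h4 : birkhoffSum T (fun x => - f x) n x = - birkhoffSum T f n x := by
    simp [birkhoffSum]
  rw [h4] at hn
  linarith

/-- Deviation of the `L`-step ergodic average from the mean. -/
noncomputable def devF (T : α → α) (f : α → ℝ) (c : ℝ) (L : ℕ) (x : α) : ℝ :=
  |birkhoffSum T f L x / L - c|

theorem birkhoffSum_meas (hT : Measurable T) {f : α → ℝ} (hf : Measurable f) (n : ℕ) :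
    Measurable (birkhoffSum T f n) := by
  unfold birkhoffSum
  exact Finset.measurable_sum _ fun i _ => hf.comp (hT.iterate i)

theorem devF_bdd {f : α → ℝ} {C : ℝ} (hb : ∀ x, |f x| ≤ C) (hC : 0 ≤ C) (c : ℝ) (L : ℕ) (x : α) :
    |devF T f c L x| ≤ C + |c| := by
  unfold devF
  rw [abs_abs]
  refine (abs_sub _ _).trans ?_
  gcongr
  rw [abs_div, Nat.abs_cast]
  refine div_le_of_le_mul₀ (by positivity) hC ?_
  refine (Finset.abs_sum_le_sum_abs _ _).trans ?_
  refine (Finset.sum_le_sum fun i _ => hb _).trans ?_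
  simp [mul_comm]

theorem exists_devF_small (hT : Ergodic T ν) {f : α → ℝ} (hf : Measurable f) {C : ℝ}
    (hb : ∀ x, |f x| ≤ C) (hC : 0 ≤ C) {δ : ℝ} (hδ : 0 < δ) :
    ∃ L : ℕ, 0 < L ∧ ∫ x, devF T f (∫ y, f y ∂ν) L x ∂ν < δ := by
  set c := ∫ y, f y ∂ν with hc
  have hae : ∀ᵐ x ∂ν, Tendsto (fun L => devF T f c L x) atTop (nhds 0) := by
    have hu : ∀ᵐ x ∂ν, ∀ j : ℕ, ∀ᶠ n : ℕ in atTop, birkhoffSum T f n x ≤ n * (c + 1 / (j+1)) :=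
      ae_all_iff.2 fun j => birk_upper hT hf hb (by
        have : (0:ℝ) < 1 / ((j:ℝ)+1) := by positivity
        linarith)
    have hl : ∀ᵐ x ∂ν, ∀ j : ℕ, ∀ᶠ n : ℕ in atTop, n * (c - 1 / (j+1)) ≤ birkhoffSum T f n x :=
      ae_all_iff.2 fun j => birk_lower hT hf hb (by
        have : (0:ℝ) < 1 / ((j:ℝ)+1) := by positivity
        linarith)
    filter_upwards [hu, hl] with x h1 h2
    rw [Metric.tendsto_nhds]
    intro e he
    obtain ⟨j, hj⟩ := exists_nat_one_div_lt he
    filter_upwards [h1 j, h2 j, eventually_gt_atTop 0] with n h3 h4 h5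
    have h5' : (0:ℝ) < n := by exact_mod_cast h5
    rw [Real.dist_eq, sub_zero]
    unfold devF
    rw [abs_abs]
    refine lt_of_le_of_lt (abs_le.2 ⟨?_, ?_⟩) hj
    · have : c - 1 / (j+1) ≤ birkhoffSum T f n x / n := by
        rw [le_div_iff₀ h5']; linarith
      linarith
    · have : birkhoffSum T f n x / n ≤ c + 1 / (j+1) := by
        rw [div_le_iff₀ h5']; linarith
      linarith
  have hlim : Tendsto (fun L => ∫ x, devF T f c L x ∂ν) atTop (nhds (∫ _, (0:ℝ) ∂ν)) := by
    refine tendsto_integral_of_dominated_convergence (fun _ => C + |c|) ?_ (integrable_const _) ?_ hae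
    · intro L
      exact (((birkhoffSum_meas hT.measurable hf L).div_const _).sub measurable_const).abs.aestronglyMeasurable
    · intro L
      exact Eventually.of_forall fun x => devF_bdd hb hC c L x
  rw [integral_zero] at hlim
  obtain ⟨L, h1, h2⟩ := ((hlim.eventually_lt_const hδ).and (eventually_gt_atTop 0)).exists
  exact ⟨L, h2, h1⟩

/-- Compare a `k`-step Birkhoff sum with its mean through the deviation function. -/
theorem birk_le_dev {f : α → ℝ} {C : ℝ} (h0 : ∀ x, 0 ≤ f x) (hb : ∀ x, f x ≤ C) (c : ℝ)
    {L : ℕ} (hL : 0 < L) (k : ℕ) (x : α) :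
    birkhoffSum T f k x ≤ k * c + birkhoffSum T (devF T f c L) k x + L * C := by
  have hL' : (0:ℝ) < L := by exact_mod_cast hL
  have hC : 0 ≤ C := (h0 x).trans (hb x)
  have h1 : ∀ l ∈ Finset.range L, birkhoffSum T f k x ≤ birkhoffSum T f k (T^[l] x) + L * C := by
    intro l hl
    have e1 := birkhoffSum_add T f l k x
    have e2 := birkhoffSum_add T f k l x
    rw [add_comm] at e1
    have e3 : birkhoffSum T f l x ≤ l * C := by
      unfold birkhoffSum
      refine (Finset.sum_le_sum fun i _ => hb _).trans ?_
      simp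
    have e4 : 0 ≤ birkhoffSum T f l (T^[k] x) := Finset.sum_nonneg fun i _ => h0 _
    have e5 : (l:ℝ) * C ≤ L * C := by
      gcongr; exact (Finset.mem_range.1 hl).le
    linarith
  have h2 := Finset.sum_le_sum h1
  rw [Finset.sum_const, Finset.card_range, nsmul_eq_mul, Finset.sum_add_distrib, Finset.sum_const,
    Finset.card_range, nsmul_eq_mul] at h2
  have h3 : ∑ l ∈ Finset.range L, birkhoffSum T f k (T^[l] x)
      = ∑ j ∈ Finset.range k, birkhoffSum T f L (T^[j] x) := by
    unfold birkhoffSum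
    rw [Finset.sum_comm]
    refine Finset.sum_congr rfl fun j _ => Finset.sum_congr rfl fun l _ => ?_
    rw [← Function.iterate_add_apply, ← Function.iterate_add_apply, add_comm]
  have h4 : ∑ j ∈ Finset.range k, birkhoffSum T f L (T^[j] x)
      ≤ ∑ j ∈ Finset.range k, (L * c + L * devF T f c L (T^[j] x)) := by
    refine Finset.sum_le_sum fun j _ => ?_
    have : birkhoffSum T f L (T^[j] x) / L - c ≤ devF T f c L (T^[j] x) := le_abs_self _
    have h6 : birkhoffSum T f L (T^[j] x) / L ≤ c + devF T f c L (T^[j] x) := by linarith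
    rw [div_le_iff₀ hL'] at h6
    linarith
  rw [Finset.sum_add_distrib, Finset.sum_const, Finset.card_range, nsmul_eq_mul,
    ← Finset.mul_sum] at h4
  rw [h3] at h2
  have h5 : (L:ℝ) * birkhoffSum T f k x
      ≤ L * (k * c + birkhoffSum T (devF T f c L) k x + L * C) := by
    have e : birkhoffSum T (devF T f c L) k x = ∑ j ∈ Finset.range k, devF T f c L (T^[j] x) := rfl
    rw [e]
    linarith
  exact le_of_mul_le_mul_left h5 hL'

end BirkhoffPart

section Blocks

theorem meas_blk (s l : ℕ) : Measurable (blk s l : (ℤ → 𝕏) → (Fin l → 𝕏)) :=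
  measurable_pi_iff.2 fun _ => measurable_pi_apply _

theorem shift_iter (s : ℕ) (ω : ℤ → 𝕏) (i : ℤ) : (shift^[s] ω) i = ω (i + s) := by
  induction s generalizing ω with
  | zero => simp
  | succ s ih =>
    rw [Function.iterate_succ_apply, ih, shift]
    congr 1; push_cast; ring

theorem blk_shift (s t l : ℕ) (ω : ℤ → 𝕏) : blk t l (shift^[s] ω) = blk (s + t) l ω := by
  funext i
  simp only [blk, shift_iter]
  congr 1; push_cast; ring

theorem blk_shift0 (s l : ℕ) (ω : ℤ → 𝕏) : blk 0 l (shift^[s] ω) = blk s l ω := by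
  rw [blk_shift, add_zero]

theorem blk_shift1 (l : ℕ) (ω : ℤ → 𝕏) : blk 0 l (shift ω) = blk 1 l ω := blk_shift0 1 l ω

theorem blk_tail (l : ℕ) (ω : ℤ → 𝕏) : Fin.tail (blk 0 (l+1) ω) = blk 1 l ω := by
  funext i
  simp only [Fin.tail, blk, Fin.val_succ]
  congr 1; push_cast; ring

theorem blk_init (l : ℕ) (ω : ℤ → 𝕏) : Fin.init (blk 0 (l+1) ω) = blk 0 l ω := by
  funext i
  simp [Fin.init, blk]

theorem blk_castAdd (n m : ℕ) (ω : ℤ → 𝕏) :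
    (fun i => blk 0 (n+m) ω (Fin.castAdd m i)) = blk 0 n ω := by
  funext i
  simp [blk]

theorem blk_natAdd (n m : ℕ) (ω : ℤ → 𝕏) :
    (fun i => blk 0 (n+m) ω (Fin.natAdd n i)) = blk n m ω := by
  funext i
  simp only [blk, Fin.val_natAdd]
  congr 1; push_cast; ring

variable {μ : Measure (ℤ → 𝕏)} [IsProbabilityMeasure μ]

theorem pblock_nonneg (k : ℕ) (w : Fin k → 𝕏) : 0 ≤ pblock μ k w := ENNReal.toReal_nonneg

theorem integral_fin {A : Type*} [Fintype A] [MeasurableSpace A] [MeasurableSingletonClass A]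
    {Φ : (ℤ → 𝕏) → A} (hΦ : Measurable Φ) (F : A → ℝ) :
    ∫ ω, F (Φ ω) ∂μ = ∑ x, (μ {ω | Φ ω = x}).toReal * F x := by
  have : IsProbabilityMeasure (μ.map Φ) := Measure.isProbabilityMeasure_map hΦ.aemeasurable
  rw [← integral_map hΦ.aemeasurable (Measurable.of_discrete (f := F)).aestronglyMeasurable,
    integral_fintype Integrable.of_finite]
  refine Finset.sum_congr rfl fun x _ => ?_
  rw [smul_eq_mul, Measure.real, Measure.map_apply hΦ (measurableSet_singleton x)]
  rfl

theorem integrable_fin {A : Type*} [Fintype A] [MeasurableSpace A] [MeasurableSingletonClass A]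
    {Φ : (ℤ → 𝕏) → A} (hΦ : Measurable Φ) (F : A → ℝ) : Integrable (fun ω => F (Φ ω)) μ := by
  have : IsProbabilityMeasure (μ.map Φ) := Measure.isProbabilityMeasure_map hΦ.aemeasurable
  have h : Integrable F (μ.map Φ) := Integrable.of_finite
  exact h.comp_measurable hΦ

theorem integral_blk (k : ℕ) (F : (Fin k → 𝕏) → ℝ) :
    ∫ ω, F (blk 0 k ω) ∂μ = ∑ w, pblock μ k w * F w :=
  integral_fin (meas_blk 0 k) F

theorem integrable_blk (s k : ℕ) (F : (Fin k → 𝕏) → ℝ) : Integrable (fun ω => F (blk s k ω)) μ :=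
  integrable_fin (meas_blk s k) F

theorem integral_blk_shift (hmp : MeasurePreserving shift μ μ) (s k : ℕ) (F : (Fin k → 𝕏) → ℝ) :
    ∫ ω, F (blk s k ω) ∂μ = ∑ w, pblock μ k w * F w := by
  rw [← integral_blk]
  have h := hmp.iterate s
  have h2 := integral_map (μ := μ) h.measurable.aemeasurable (f := fun ω => F (blk 0 k ω))
      ((Measurable.of_discrete (f := F)).comp (meas_blk 0 k)).aestronglyMeasurable
  rw [h.map_eq] at h2
  rw [h2]
  simp only [blk_shift0]

theorem sum_pblock (k : ℕ) : ∑ w, pblock μ k w = 1 := by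
  have := integral_blk (μ := μ) k (fun _ => 1)
  simp at this
  exact this.symm

theorem sum_snoc {k : ℕ} (F : (Fin (k+1) → 𝕏) → ℝ) :
    ∑ w, F w = ∑ u : Fin k → 𝕏, ∑ b : 𝕏, F (Fin.snoc u b) := by
  rw [← (Fin.snocEquiv (fun _ => 𝕏)).sum_comp, Fintype.sum_prod_type_right]
  rfl

theorem sum_cons {k : ℕ} (F : (Fin (k+1) → 𝕏) → ℝ) :
    ∑ w, F w = ∑ u : Fin k → 𝕏, ∑ a : 𝕏, F (Fin.cons a u) := by
  rw [← (Fin.consEquiv (fun _ => 𝕏)).sum_comp, Fintype.sum_prod_type_right]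
  rfl

theorem sum_append {n m : ℕ} (F : (Fin (n+m) → 𝕏) → ℝ) :
    ∑ w, F w = ∑ u : Fin n → 𝕏, ∑ v : Fin m → 𝕏, F (Fin.append u v) := by
  rw [← (Fin.appendEquiv n m).sum_comp, Fintype.sum_prod_type]
  rfl

theorem marg_snoc {k : ℕ} (u : Fin k → 𝕏) :
    ∑ b : 𝕏, pblock μ (k+1) (Fin.snoc u b) = pblock μ k u := by
  have h1 := integral_blk (μ := μ) k (fun w => if w = u then 1 else 0)
  have h2 := integral_blk (μ := μ) (k+1) (fun w => if Fin.init w = u then 1 else 0)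
  simp only [blk_init] at h2
  rw [h1, sum_snoc] at h2
  simp only [Fin.init_snoc, mul_ite, mul_one, mul_zero] at h2
  rw [Finset.sum_ite_eq' Finset.univ u] at h2
  simp only [Finset.mem_univ, if_true] at h2
  rw [h2]
  rw [Finset.sum_eq_single u]
  · simp
  · intro b _ hb; simp [hb]
  · simp

theorem marg_cons (hmp : MeasurePreserving shift μ μ) {k : ℕ} (u : Fin k → 𝕏) :
    ∑ a : 𝕏, pblock μ (k+1) (Fin.cons a u) = pblock μ k u := by
  have h1 := integral_blk_shift hmp 1 k (fun w => if w = u then 1 else 0)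
  have h2 := integral_blk (μ := μ) (k+1) (fun w => if Fin.tail w = u then 1 else 0)
  simp only [blk_tail] at h2
  rw [h1, sum_cons] at h2
  simp only [Fin.tail_cons, mul_ite, mul_one, mul_zero] at h2
  rw [Finset.sum_ite_eq' Finset.univ u] at h2
  simp only [Finset.mem_univ, if_true] at h2
  rw [h2]
  rw [Finset.sum_eq_single u]
  · simp
  · intro b _ hb; simp [hb]
  · simp

theorem pblock_le_tail (hmp : MeasurePreserving shift μ μ) {k : ℕ} (w : Fin (k+1) → 𝕏) :
    pblock μ (k+1) w ≤ pblock μ k (Fin.tail w) := by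
  rw [← marg_cons hmp (Fin.tail w)]
  conv_lhs => rw [← Fin.cons_self_tail w]
  exact Finset.single_le_sum (f := fun a => pblock μ (k+1) (Fin.cons a (Fin.tail w)))
    (fun a _ => pblock_nonneg _ _) (Finset.mem_univ (w 0))

theorem pblock_le_init {k : ℕ} (w : Fin (k+1) → 𝕏) :
    pblock μ (k+1) w ≤ pblock μ k (Fin.init w) := by
  rw [← marg_snoc (Fin.init w)]
  conv_lhs => rw [← Fin.snoc_init_self w]
  exact Finset.single_le_sum (f := fun a => pblock μ (k+1) (Fin.snoc (Fin.init w) a))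
    (fun a _ => pblock_nonneg _ _) (Finset.mem_univ (w (Fin.last k)))

theorem ae_pblock_pos (k : ℕ) : ∀ᵐ ω ∂μ, 0 < pblock μ k (blk 0 k ω) := by
  have h : ∀ w : Fin k → 𝕏, ∀ᵐ ω ∂μ, blk 0 k ω = w → 0 < pblock μ k w := by
    intro w
    by_cases hw : 0 < pblock μ k w
    · exact Eventually.of_forall fun _ _ => hw
    · have h0 : pblock μ k w = 0 := le_antisymm (not_lt.1 hw) (pblock_nonneg _ _)
      have h1 : μ {ω | blk 0 k ω = w} = 0 := by
        rcases (ENNReal.toReal_eq_zero_iff _).1 h0 with h | h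
        · exact h
        · exact absurd h (measure_ne_top _ _)
      have h2 : ∀ᵐ ω ∂μ, ¬ blk 0 k ω = w := by
        rw [ae_iff]; simpa using h1
      filter_upwards [h2] with ω hω h3
      exact absurd h3 hω
  filter_upwards [ae_all_iff.2 h] with ω hω
  exact hω _ rfl

/-- Inverse conditional probability of the first symbol given the next `j` symbols. -/
noncomputable def Yr (μ : Measure (ℤ → 𝕏)) (j : ℕ) (ω : ℤ → 𝕏) : ℝ :=
  pblock μ j (blk 1 j ω) / pblock μ (j+1) (blk 0 (j+1) ω)

/-- `Yr` as a function of the block. -/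
noncomputable def Yw (μ : Measure (ℤ → 𝕏)) (j : ℕ) (w : Fin (j+1) → 𝕏) : ℝ :=
  pblock μ j (Fin.tail w) / pblock μ (j+1) w

theorem Yr_eq (j : ℕ) (ω : ℤ → 𝕏) : Yr μ j ω = Yw μ j (blk 0 (j+1) ω) := by
  rw [Yr, Yw, blk_tail]

theorem Yr_meas (j : ℕ) : Measurable (Yr μ j) := by
  have : Yr μ j = fun ω => Yw μ j (blk 0 (j+1) ω) := funext (Yr_eq j)
  rw [this]
  exact (Measurable.of_discrete (f := Yw μ j)).comp (meas_blk 0 (j+1))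

theorem Yr_int (j : ℕ) : Integrable (Yr μ j) μ := by
  have : Yr μ j = fun ω => Yw μ j (blk 0 (j+1) ω) := funext (Yr_eq j)
  rw [this]
  exact integrable_blk 0 (j+1) (Yw μ j)

theorem Yr_nonneg (j : ℕ) (ω : ℤ → 𝕏) : 0 ≤ Yr μ j ω :=
  div_nonneg (pblock_nonneg _ _) (pblock_nonneg _ _)

theorem ae_Yr_ge_one (hmp : MeasurePreserving shift μ μ) (j : ℕ) : ∀ᵐ ω ∂μ, 1 ≤ Yr μ j ω := by
  filter_upwards [ae_pblock_pos (j+1)] with ω hω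
  rw [Yr, one_le_div hω, ← blk_tail]
  exact pblock_le_tail hmp _

theorem mul_div_le_self {p q : ℝ} (hq : 0 ≤ q) : p * (q / p) ≤ q := by
  by_cases hp : p = 0
  · simp [hp, hq]
  · rw [mul_div_cancel₀ _ hp]

theorem Yr_integral_le (j : ℕ) : ∫ ω, Yr μ j ω ∂μ ≤ Fintype.card 𝕏 := by
  simp only [Yr_eq]
  rw [integral_blk (j+1) (Yw μ j), sum_cons]
  calc _ ≤ ∑ u : Fin j → 𝕏, ∑ a : 𝕏, pblock μ j u := by
        refine Finset.sum_le_sum fun u _ => Finset.sum_le_sum fun a _ => ?_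
        rw [Yw, Fin.tail_cons]
        exact mul_div_le_self (pblock_nonneg _ _)
    _ = Fintype.card 𝕏 := by
        simp only [Finset.sum_const, nsmul_eq_mul, ← Finset.mul_sum, sum_pblock]
        simp

theorem Yr_log (hmp : MeasurePreserving shift μ μ) (j : ℕ) :
    ∫ ω, Real.logb 2 (Yr μ j ω) ∂μ = Hblock μ (j+1) - Hblock μ j := by
  have h1 : ∀ᵐ ω ∂μ, Real.logb 2 (Yr μ j ω) =
      Real.logb 2 (pblock μ j (blk 1 j ω)) - Real.logb 2 (pblock μ (j+1) (blk 0 (j+1) ω)) := by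
    filter_upwards [ae_pblock_pos (μ := μ) (j+1)] with ω hω
    have := hω.trans_le (pblock_le_tail hmp _)
    rw [blk_tail] at this
    rw [Yr, Real.logb_div this.ne' hω.ne']
  rw [integral_congr_ae h1, integral_sub (integrable_blk 1 j fun w => Real.logb 2 (pblock μ j w))
    (integrable_blk 0 (j+1) fun w => Real.logb 2 (pblock μ (j+1) w)),
    integral_blk_shift hmp 1 j fun w => Real.logb 2 (pblock μ j w),
    integral_blk (j+1) fun w => Real.logb 2 (pblock μ (j+1) w)]
  simp only [Hblock, Hent]
  ring

theorem Yr_log_int (j : ℕ) : Integrable (fun ω => Real.logb 2 (Yr μ j ω)) μ := by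
  simp only [Yr_eq]
  exact integrable_blk 0 (j+1) fun w => Real.logb 2 (Yw μ j w)

/-- The filtration generated by the growing blocks. -/
def blkFilt : Filtration ℕ (inferInstance : MeasurableSpace (ℤ → 𝕏)) where
  seq j := MeasurableSpace.comap (blk 0 (j+1)) inferInstance
  mono' := by
    intro i j hij
    refine MeasurableSpace.comap_le_iff_le_map.2 ?_
    have : (blk 0 (i+1) : (ℤ → 𝕏) → _) =
        (fun w (t : Fin (i+1)) => w (Fin.castLE (by omega) t)) ∘ blk 0 (j+1) := by
      funext ω t
      simp [blk]
    rw [← MeasurableSpace.comap_le_iff_le_map, this, ← MeasurableSpace.comap_comp]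
    exact MeasurableSpace.comap_mono (Measurable.of_discrete (f :=
      (fun (w : Fin (j+1) → 𝕏) (t : Fin (i+1)) => w (Fin.castLE (by omega) t)))).comap_le
  le' j := (meas_blk 0 (j+1)).comap_le

theorem Yr_super : Supermartingale (Yr μ) blkFilt μ := by
  refine supermartingale_of_setIntegral_succ_le ?_ Yr_int ?_
  · intro j
    refine Measurable.stronglyMeasurable ?_
    have : Yr μ j = fun ω => Yw μ j (blk 0 (j+1) ω) := funext (Yr_eq j)
    rw [this]
    exact (Measurable.of_discrete (f := Yw μ j)).comp (comap_measurable _)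
  · intro i s hs
    obtain ⟨S, _, rfl⟩ := hs
    classical
    have hm : MeasurableSet ((blk 0 (i+1) : (ℤ → 𝕏) → _) ⁻¹' S) :=
      meas_blk 0 (i+1) (Set.Finite.measurableSet (Set.toFinite S))
    rw [← integral_indicator hm, ← integral_indicator hm]
    have e1 : ∀ ω, ((blk 0 (i+1) : (ℤ → 𝕏) → _) ⁻¹' S).indicator (Yr μ i) ω
        = (fun w => if w ∈ S then Yw μ i w else 0) (blk 0 (i+1) ω) := by
      intro ω
      simp [Set.indicator, Yr_eq]
    have e2 : ∀ ω, ((blk 0 (i+1) : (ℤ → 𝕏) → _) ⁻¹' S).indicator (Yr μ (i+1)) ω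
        = (fun w : Fin (i+1+1) → 𝕏 => if (Fin.init w : Fin (i+1) → 𝕏) ∈ S then Yw μ (i+1) w else 0) (blk 0 (i+1+1) ω) := by
      intro ω
      simp [Set.indicator, Yr_eq, blk_init]
    simp only [e1, e2]
    rw [integral_blk (i+1) (fun w => if w ∈ S then Yw μ i w else 0),
      integral_blk (i+1+1) (fun w : Fin (i+1+1) → 𝕏 => if (Fin.init w : Fin (i+1) → 𝕏) ∈ S then Yw μ (i+1) w else 0), sum_snoc]
    refine Finset.sum_le_sum fun w _ => ?_
    simp only [Fin.init_snoc]
    split_ifs with hw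
    · by_cases hp : pblock μ (i+1) w = 0
      · rw [hp, zero_mul]
        refine Finset.sum_nonpos fun b _ => ?_
        have h0 : pblock μ (i+1+1) (Fin.snoc w b) = 0 := by
          refine le_antisymm ?_ (pblock_nonneg _ _)
          have := pblock_le_init (μ := μ) (Fin.snoc w b : Fin (i+1+1) → 𝕏)
          rwa [Fin.init_snoc, hp] at this
        rw [h0, zero_mul]
      · rw [Yw, mul_div_cancel₀ _ hp, ← marg_snoc]
        refine Finset.sum_le_sum fun b _ => ?_
        have h3 : Fin.tail (Fin.snoc w b : Fin (i+1+1) → 𝕏) = Fin.snoc (Fin.tail w) b := by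
          conv_lhs => rw [← Fin.cons_self_tail w, ← Fin.cons_snoc_eq_snoc_cons, Fin.tail_cons]
        rw [Yw, h3]
        exact mul_div_le_self (pblock_nonneg _ _)
    · simp

theorem exists_Y (hmp : MeasurePreserving shift μ μ) :
    ∃ Y : (ℤ → 𝕏) → ℝ, Measurable Y ∧
      ∀ᵐ ω ∂μ, 1 ≤ Y ω ∧ Tendsto (fun j => Yr μ j ω) atTop (nhds (Y ω)) := by
  have hs := (Yr_super (μ := μ)).neg
  have hb : ∀ j, eLpNorm ((-Yr μ) j) 1 μ ≤ (Fintype.card 𝕏 : NNReal) := by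
    intro j
    rw [Pi.neg_apply, eLpNorm_neg, eLpNorm_one_eq_lintegral_enorm]
    have h1 : ∀ ω, ‖Yr μ j ω‖ₑ = ENNReal.ofReal (Yr μ j ω) := fun ω =>
      Real.enorm_of_nonneg (Yr_nonneg j ω)
    simp only [h1]
    rw [← ofReal_integral_eq_lintegral_ofReal (Yr_int j)
      (Eventually.of_forall fun ω => Yr_nonneg j ω)]
    refine (ENNReal.ofReal_le_ofReal (Yr_integral_le j)).trans ?_
    simp
  have hlim := hs.ae_tendsto_limitProcess hb
  refine ⟨fun ω => - (blkFilt.limitProcess (-Yr μ) μ ω), ?_, ?_⟩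
  · have := (Filtration.stronglyMeasurable_limit_process' (ℱ := blkFilt) (f := -Yr μ) (μ := μ))
    exact this.measurable.neg
  · filter_upwards [hlim, ae_all_iff.2 (ae_Yr_ge_one hmp)] with ω h1 h2
    have h3 : Tendsto (fun j => Yr μ j ω) atTop (nhds (-(blkFilt.limitProcess (-Yr μ) μ ω))) := by
      simpa using h1.neg
    exact ⟨ge_of_tendsto' h3 h2, h3⟩

end Blocks

section SMB

theorem freq_incr_ge {a : ℕ → ℝ} {h : ℝ} (ha : Tendsto (fun k : ℕ => a k / k) atTop (nhds h))
    {δ : ℝ} (hδ : 0 < δ) : ∃ᶠ j in atTop, h - δ ≤ a (j+1) - a j := by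
  by_contra hcon
  rw [not_frequently, eventually_atTop] at hcon
  obtain ⟨J, hJ⟩ := hcon
  have h1 : ∀ t : ℕ, a (J + t) ≤ a J + t * (h - δ) := by
    intro t
    induction t with
    | zero => simp
    | succ t ih =>
      have := hJ (J + t) (by omega)
      push_cast
      rw [← add_assoc]
      linarith
  have h2 : Tendsto (fun k : ℕ => (a J - J * (h - δ)) / k + (h - δ)) atTop (nhds (0 + (h - δ))) :=
    (tendsto_const_div_atTop_nhds_zero_nat _).add tendsto_const_nhds
  have h3 : h ≤ 0 + (h - δ) := by
    refine le_of_tendsto_of_tendsto ha h2 ?_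
    filter_upwards [eventually_gt_atTop 0, eventually_ge_atTop J] with k hk hkJ
    have hk' : (0:ℝ) < k := by exact_mod_cast hk
    have h4 := h1 (k - J)
    rw [Nat.add_sub_cancel' hkJ, Nat.cast_sub hkJ] at h4
    rw [div_add' _ _ _ hk'.ne']
    gcongr
    linarith
  linarith

theorem exists_incr_le {a : ℕ → ℝ} {h : ℝ} (ha : Tendsto (fun k : ℕ => a k / k) atTop (nhds h))
    {δ : ℝ} (hδ : 0 < δ) : ∃ j, a (j+1) - a j ≤ h + δ := by
  have h1 : Tendsto (fun k : ℕ => (fun k => - a k) k / k) atTop (nhds (-h)) := by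
    simpa [neg_div] using ha.neg
  obtain ⟨j, hj⟩ := (freq_incr_ge h1 hδ).exists
  exact ⟨j, by linarith⟩

theorem logb_trunc {y : ℝ} (hy : 1 ≤ y) (C : ℕ) :
    Real.logb 2 y ≤ max 0 (min (Real.logb 2 y) C) + 2 / 2 ^ C * y := by
  have h2 : (0:ℝ) < 2 ^ C := by positivity
  have hy0 : 0 < y := by linarith
  have h3 : Real.logb 2 y ≤ C + 2 / 2 ^ C * y := by
    have e : Real.logb 2 (y / 2 ^ C) = Real.logb 2 y - C := by
      rw [Real.logb_div hy0.ne' h2.ne', Real.logb_pow, Real.logb_self_eq_one (by norm_num)]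
      ring
    have h4 : Real.logb 2 (y / 2 ^ C) ≤ 2 * (y / 2 ^ C) := by
      have h5 := Real.log_le_sub_one_of_pos (show 0 < y / 2 ^ C by positivity)
      have h6 := Real.log_two_gt_d9
      rw [Real.logb, div_le_iff₀ (by linarith)]
      have h7 : 0 < y / 2 ^ C := by positivity
      nlinarith
    have h8 : 2 / 2 ^ C * y = 2 * (y / 2 ^ C) := by ring
    linarith
  rcases le_total (Real.logb 2 y) C with h | h
  · rw [min_eq_left h]
    have : 0 ≤ 2 / 2 ^ C * y := by positivity
    linarith [le_max_right 0 (Real.logb 2 y)]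
  · rw [min_eq_right h]
    linarith [le_max_right 0 (C:ℝ)]

variable {μ : Measure (ℤ → 𝕏)} [IsProbabilityMeasure μ]

theorem bc_geom {A : ℕ → Set (ℤ → 𝕏)} {r : ENNReal} (hr : r < 1) (hA : ∀ᶠ n in atTop, μ (A n) ≤ r ^ n) :
    ∀ᵐ ω ∂μ, ∀ᶠ n in atTop, ω ∉ A n := by
  obtain ⟨N, hN⟩ := eventually_atTop.1 hA
  have h1 : ∑' n, μ (A (n + N)) ≠ ⊤ := by
    refine ne_top_of_le_ne_top ?_ (ENNReal.tsum_le_tsum fun n =>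
      (hN (n+N) (by omega)).trans (pow_le_pow_right_of_le_one' hr.le (Nat.le_add_right n N)))
    rw [ENNReal.tsum_geometric]
    exact ENNReal.inv_ne_top.2 (tsub_pos_of_lt hr).ne'
  have h2 := ae_eventually_notMem h1
  filter_upwards [h2] with ω hω
  obtain ⟨M, hM⟩ := eventually_atTop.1 hω
  rw [eventually_atTop]
  refine ⟨M + N, fun n hn => ?_⟩
  have := hM (n - N) (by omega)
  rwa [Nat.sub_add_cancel (by omega)] at this

/-- Probability of the block of length `k` starting after position `s`. -/
noncomputable def Pk (μ : Measure (ℤ → 𝕏)) (k s : ℕ) (ω : ℤ → 𝕏) : ℝ := pblock μ k (blk s k ω)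

theorem ae_Pk_pos (hmp : MeasurePreserving shift μ μ) :
    ∀ᵐ ω ∂μ, ∀ k s, 0 < Pk μ k s ω := by
  rw [ae_all_iff]
  intro k
  rw [ae_all_iff]
  intro s
  have := (hmp.iterate s).quasiMeasurePreserving.ae (ae_pblock_pos (μ := μ) k)
  filter_upwards [this] with ω hω
  rwa [blk_shift0] at hω

theorem Yr_shift (j i : ℕ) (ω : ℤ → 𝕏) :
    Yr μ j (shift^[i] ω) = Pk μ j (i+1) ω / Pk μ (j+1) i ω := by
  rw [Yr, blk_shift, blk_shift0, Pk, Pk]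

theorem telescope {ω : ℤ → 𝕏} (hω : ∀ k s, 0 < Pk μ k s ω) (n m t : ℕ) (ht : t ≤ n) :
    ∏ i ∈ Finset.range t, Yr μ (m + (n - 1 - i)) (shift^[i] ω)
      = Pk μ (m + (n - t)) t ω / Pk μ (m + n) 0 ω := by
  induction t with
  | zero => simp [div_self (hω (m+n) 0).ne']
  | succ t ih =>
    rw [Finset.prod_range_succ, ih (by omega), Yr_shift]
    have e1 : m + (n - 1 - t) + 1 = m + (n - t) := by omega
    have e2 : m + (n - (t+1)) = m + (n - 1 - t) := by omega
    rw [e1, e2]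
    have h1 := (hω (m + (n - t)) t).ne'
    have h2 := (hω (m+n) 0).ne'
    field_simp

theorem Z_integral_le (n m : ℕ) :
    ∫ ω, Pk μ n 0 ω * (Pk μ m n ω / Pk μ (n + m) 0 ω) ∂μ ≤ 1 := by
  have h1 : ∀ ω, Pk μ n 0 ω * (Pk μ m n ω / Pk μ (n + m) 0 ω) =
    (fun w : Fin (n+m) → 𝕏 => pblock μ n (fun i => w (Fin.castAdd m i)) *
      (pblock μ m (fun i => w (Fin.natAdd n i)) / pblock μ (n+m) w)) (blk 0 (n+m) ω) := by
    intro ω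
    simp only [blk_castAdd, blk_natAdd, Pk]
  simp only [h1]
  rw [integral_blk (n+m) (fun w : Fin (n+m) → 𝕏 => pblock μ n (fun i => w (Fin.castAdd m i)) *
      (pblock μ m (fun i => w (Fin.natAdd n i)) / pblock μ (n+m) w)), sum_append]
  calc _ ≤ ∑ u : Fin n → 𝕏, ∑ v : Fin m → 𝕏, pblock μ n u * pblock μ m v := by
        refine Finset.sum_le_sum fun u _ => Finset.sum_le_sum fun v _ => ?_
        simp only [Fin.append_left, Fin.append_right]
        rw [mul_left_comm]
        exact mul_le_mul_of_nonneg_left (mul_div_le_self (pblock_nonneg _ _)) (pblock_nonneg _ _)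
    _ = 1 := by
        simp only [← Finset.mul_sum, sum_pblock, mul_one]

theorem Pk_meas (k s : ℕ) : Measurable (Pk μ k s) :=
  (Measurable.of_discrete (f := pblock μ k)).comp (meas_blk s k)

theorem Pk_nonneg (k s : ℕ) (ω : ℤ → 𝕏) : 0 ≤ Pk μ k s ω := pblock_nonneg _ _

theorem Z_lim (hmp : MeasurePreserving shift μ μ) {Y : (ℤ → 𝕏) → ℝ}
    (hY : ∀ᵐ ω ∂μ, ∀ i, Tendsto (fun j => Yr μ j (shift^[i] ω)) atTop (nhds (Y (shift^[i] ω))))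
    (n : ℕ) :
    ∫⁻ ω, ENNReal.ofReal (Pk μ n 0 ω * ∏ i ∈ Finset.range n, Y (shift^[i] ω)) ∂μ ≤ 1 := by
  set Z : ℕ → (ℤ → 𝕏) → ℝ := fun m ω => Pk μ n 0 ω * (Pk μ m n ω / Pk μ (n + m) 0 ω) with hZ
  have hZm : ∀ m, Measurable (Z m) := fun m =>
    (Pk_meas n 0).mul ((Pk_meas m n).div (Pk_meas (n+m) 0))
  have hZ1 : ∀ m, ∫⁻ ω, ENNReal.ofReal (Z m ω) ∂μ ≤ 1 := by
    intro m
    have hn : ∀ ω, 0 ≤ Z m ω := fun ω =>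
      mul_nonneg (Pk_nonneg _ _ _) (div_nonneg (Pk_nonneg _ _ _) (Pk_nonneg _ _ _))
    have hi : Integrable (Z m) μ := by
      have h1 : ∀ ω, Z m ω =
        (fun w : Fin (n+m) → 𝕏 => pblock μ n (fun i => w (Fin.castAdd m i)) *
          (pblock μ m (fun i => w (Fin.natAdd n i)) / pblock μ (n+m) w)) (blk 0 (n+m) ω) := by
        intro ω
        simp only [hZ, blk_castAdd, blk_natAdd, Pk]
      rw [funext h1]
      exact integrable_blk 0 (n+m) (fun w : Fin (n+m) → 𝕏 => pblock μ n (fun i => w (Fin.castAdd m i)) *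
          (pblock μ m (fun i => w (Fin.natAdd n i)) / pblock μ (n+m) w))
    rw [← ofReal_integral_eq_lintegral_ofReal hi (Eventually.of_forall hn)]
    exact (ENNReal.ofReal_le_ofReal (Z_integral_le n m)).trans (by simp)
  have hlim : ∀ᵐ ω ∂μ, Tendsto (fun m => Z m ω) atTop
      (nhds (Pk μ n 0 ω * ∏ i ∈ Finset.range n, Y (shift^[i] ω))) := by
    filter_upwards [hY, ae_Pk_pos hmp] with ω h1 h2
    have h3 : Tendsto (fun m => Pk μ n 0 ω *
        ∏ i ∈ Finset.range n, Yr μ (m + (n - 1 - i)) (shift^[i] ω)) atTop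
        (nhds (Pk μ n 0 ω * ∏ i ∈ Finset.range n, Y (shift^[i] ω))) := by
      refine Tendsto.const_mul _ (tendsto_finsetProd _ fun i _ => ?_)
      exact (h1 i).comp (tendsto_add_atTop_nat (n - 1 - i))
    refine h3.congr fun m => ?_
    rw [telescope h2 n m n le_rfl, Nat.sub_self, add_zero, add_comm m n]
  calc _ = ∫⁻ ω, liminf (fun m => ENNReal.ofReal (Z m ω)) atTop ∂μ := by
        refine lintegral_congr_ae ?_
        filter_upwards [hlim] with ω hω
        exact ((ENNReal.continuous_ofReal.tendsto _).comp hω).liminf_eq.symm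
    _ ≤ liminf (fun m => ∫⁻ ω, ENNReal.ofReal (Z m ω) ∂μ) atTop :=
        lintegral_liminf_le fun m => (hZm m).ennreal_ofReal
    _ ≤ 1 := by
        refine liminf_le_of_frequently_le' (Frequently.of_forall hZ1)

theorem trunc_bdd (y : ℝ) (C : ℕ) : |max 0 (min (Real.logb 2 y) C)| ≤ (C:ℝ) := by
  rw [abs_of_nonneg (le_max_left _ _)]
  exact max_le (Nat.cast_nonneg _) (min_le_right _ _)

theorem trunc_meas {f : (ℤ → 𝕏) → ℝ} (hf : Measurable f) (C : ℕ) :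
    Measurable (fun ω => max 0 (min (Real.logb 2 (f ω)) (C:ℝ))) := by
  have : Measurable (fun ω => Real.logb 2 (f ω)) := by
    simp only [Real.logb]
    exact (Real.measurable_log.comp hf).div_const _
  exact measurable_const.max (this.min measurable_const)

theorem smb_lower (herg : Ergodic shift μ) {h : ℝ}
    (hrate : Tendsto (fun k : ℕ => Hblock μ k / k) atTop (nhds h)) {δ : ℝ} (hδ : 0 < δ) :
    ∀ᵐ ω ∂μ, ∀ᶠ n : ℕ in atTop, Pk μ n 0 ω ≤ (2:ℝ) ^ (-((n:ℝ) * (h - δ))) := by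
  have hmp := herg.toMeasurePreserving
  obtain ⟨Y, hYm, hY⟩ := exists_Y hmp
  have hYs : ∀ᵐ ω ∂μ, ∀ i, 1 ≤ Y (shift^[i] ω) ∧
      Tendsto (fun j => Yr μ j (shift^[i] ω)) atTop (nhds (Y (shift^[i] ω))) := by
    rw [ae_all_iff]
    intro i
    exact (hmp.iterate i).quasiMeasurePreserving.ae hY
  -- choose the truncation level
  obtain ⟨C, hC⟩ : ∃ C : ℕ, 2 / 2 ^ C * (Fintype.card 𝕏 : ℝ) < δ / 8 := by
    have h1 : Tendsto (fun C : ℕ => 2 * (Fintype.card 𝕏 : ℝ) * (1/2:ℝ) ^ C) atTop (nhds (2 * (Fintype.card 𝕏 : ℝ) * 0)) :=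
      (tendsto_pow_atTop_nhds_zero_of_lt_one (by norm_num) (by norm_num)).const_mul _
    rw [mul_zero] at h1
    obtain ⟨C, hC⟩ := (h1.eventually_lt_const (show 0 < δ / 8 by linarith)).exists
    refine ⟨C, ?_⟩
    have : 2 / 2 ^ C * (Fintype.card 𝕏 : ℝ) = 2 * (Fintype.card 𝕏 : ℝ) * (1/2:ℝ) ^ C := by
      rw [one_div, inv_pow]; ring
    rw [this]; exact hC
  set φ : (ℤ → 𝕏) → ℝ := fun ω => max 0 (min (Real.logb 2 (Y ω)) (C:ℝ)) with hφ
  have hφj : Tendsto (fun j => ∫ ω, max 0 (min (Real.logb 2 (Yr μ j ω)) (C:ℝ)) ∂μ) atTop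
      (nhds (∫ ω, φ ω ∂μ)) := by
    refine tendsto_integral_of_dominated_convergence (fun _ => (C:ℝ)) ?_ (integrable_const _) ?_ ?_
    · intro j; exact (trunc_meas (Yr_meas j) C).aestronglyMeasurable
    · intro j; exact Eventually.of_forall fun ω => trunc_bdd _ C
    · filter_upwards [hY] with ω hω
      have : Tendsto (fun j => Real.logb 2 (Yr μ j ω)) atTop (nhds (Real.logb 2 (Y ω))) := by
        simp only [Real.logb]
        exact (hω.2.log (by linarith [hω.1])).div_const _
      exact tendsto_const_nhds.max (this.min tendsto_const_nhds)
  have hφint : h - δ / 2 < ∫ ω, φ ω ∂μ := by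
    have h1 : h - δ / 4 ≤ ∫ ω, φ ω ∂μ := by
      refine ge_of_tendsto_of_frequently hφj ?_
      refine (freq_incr_ge hrate (show 0 < δ / 8 by linarith)).mono fun j hj => ?_
      have h2 : ∫ ω, Real.logb 2 (Yr μ j ω) ∂μ ≤
          ∫ ω, (max 0 (min (Real.logb 2 (Yr μ j ω)) (C:ℝ)) + 2 / 2 ^ C * Yr μ j ω) ∂μ := by
        refine integral_mono_ae (Yr_log_int j) ((integrable_of_bdd (trunc_meas (Yr_meas j) C)
          (fun ω => trunc_bdd _ C)).add ((Yr_int j).const_mul _)) ?_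
        filter_upwards [ae_Yr_ge_one hmp j] with ω hω
        exact logb_trunc hω C
      rw [Yr_log hmp, integral_add (integrable_of_bdd (trunc_meas (Yr_meas j) C)
          (fun ω => trunc_bdd _ C)) ((Yr_int j).const_mul _), integral_const_mul] at h2
      have h3 : 2 / 2 ^ C * ∫ ω, Yr μ j ω ∂μ ≤ 2 / 2 ^ C * (Fintype.card 𝕏 : ℝ) :=
        mul_le_mul_of_nonneg_left (Yr_integral_le j) (by positivity)
      linarith
    linarith
  have hb := birk_lower herg (trunc_meas hYm C) (fun ω => trunc_bdd (Y ω) C) hφint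
  -- Borel-Cantelli
  set r : ENNReal := ENNReal.ofReal ((2:ℝ) ^ (-(δ/2))) with hr
  have hr1 : r < 1 := by
    rw [hr, ENNReal.ofReal_lt_one]
    exact Real.rpow_lt_one_of_one_lt_of_neg (by norm_num) (by linarith)
  have hbc : ∀ᵐ ω ∂μ, ∀ᶠ n : ℕ in atTop, ω ∉ {ω | ENNReal.ofReal ((2:ℝ) ^ ((n:ℝ) * (δ/2))) ≤
      ENNReal.ofReal (Pk μ n 0 ω * ∏ i ∈ Finset.range n, Y (shift^[i] ω))} := by
    refine bc_geom hr1 (Eventually.of_forall fun n => ?_)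
    have hm : Measurable (fun ω => ENNReal.ofReal (Pk μ n 0 ω * ∏ i ∈ Finset.range n, Y (shift^[i] ω))) :=
      ((Pk_meas n 0).mul (Finset.measurable_prod _ fun i _ =>
        hYm.comp (hmp.measurable.iterate i))).ennreal_ofReal
    have h1 := mul_meas_ge_le_lintegral (μ := μ) hm (ENNReal.ofReal ((2:ℝ) ^ ((n:ℝ) * (δ/2))))
    have h2 := h1.trans (Z_lim hmp (hYs.mono fun ω hω i => (hω i).2) n)
    have h3 : r ^ n * ENNReal.ofReal ((2:ℝ) ^ ((n:ℝ) * (δ/2))) = 1 := by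
      rw [hr, ← ENNReal.ofReal_pow (by positivity), ← ENNReal.ofReal_mul (by positivity),
        ← Real.rpow_natCast, ← Real.rpow_mul (by norm_num), ← Real.rpow_add (by norm_num)]
      rw [show -(δ / 2) * (n:ℝ) + n * (δ / 2) = 0 by ring]
      simp
    calc _ = r ^ n * (ENNReal.ofReal ((2:ℝ) ^ ((n:ℝ) * (δ/2))) * μ _) := by
          rw [← mul_assoc, h3, one_mul]
      _ ≤ r ^ n * 1 := by gcongr
      _ = r ^ n := mul_one _
  filter_upwards [hb, hbc, hYs, ae_Pk_pos hmp] with ω h1 h2 h3 h4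
  filter_upwards [h1, h2] with n h5 h6
  simp only [not_le] at h6
  have h7 := (ENNReal.ofReal_lt_ofReal_iff (by positivity)).1 h6
  have hprod : 0 < ∏ i ∈ Finset.range n, Y (shift^[i] ω) :=
    Finset.prod_pos fun i _ => by linarith [(h3 i).1]
  have h8 : (2:ℝ) ^ ((n:ℝ) * (h - δ/2)) ≤ ∏ i ∈ Finset.range n, Y (shift^[i] ω) := by
    rw [← Real.le_logb_iff_rpow_le (by norm_num) hprod, Real.logb_prod]
    · refine h5.trans ?_
      unfold birkhoffSum
      refine Finset.sum_le_sum fun i _ => ?_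
      exact max_le (Real.logb_nonneg (by norm_num) (h3 i).1) (min_le_left _ _)
    · intro i _; linarith [(h3 i).1]
  have h9 : Pk μ n 0 ω * (2:ℝ) ^ ((n:ℝ) * (h - δ/2)) ≤ (2:ℝ) ^ ((n:ℝ) * (δ/2)) :=
    (mul_le_mul_of_nonneg_left h8 (Pk_nonneg _ _ _)).trans h7.le
  have h10 : (2:ℝ) ^ (-((n:ℝ) * (h - δ))) = (2:ℝ) ^ ((n:ℝ) * (δ/2)) / (2:ℝ) ^ ((n:ℝ) * (h - δ/2)) := by
    rw [← Real.rpow_sub (by norm_num)]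
    congr 1; ring
  rw [h10, le_div_iff₀ (by positivity)]
  exact h9

end SMB

section Code

variable {μ : Measure (ℤ → 𝕏)} [IsProbabilityMeasure μ]

/-- Extension of a finite word by a fixed letter. -/
noncomputable def extw {k : ℕ} (w : Fin k → 𝕏) (i : ℕ) : 𝕏 :=
  if h : i < k then w ⟨i, h⟩ else Classical.arbitrary 𝕏

/-- Backward Markov product weight. -/
noncomputable def qk {m : ℕ} (κ : (Fin (m+1) → 𝕏) → ℝ) : (k : ℕ) → (Fin k → 𝕏) → ℝ
  | 0, _ => 1
  | k+1, w => κ (fun j : Fin (m+1) => extw w j) * qk κ k (Fin.tail w)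

theorem qk_pos {m : ℕ} {κ : (Fin (m+1) → 𝕏) → ℝ} (hκ : ∀ w, 0 < κ w) :
    ∀ (k : ℕ) (w : Fin k → 𝕏), 0 < qk κ k w
  | 0, _ => one_pos
  | k+1, w => mul_pos (hκ _) (qk_pos hκ k _)

theorem extw_cons {m k : ℕ} (a : 𝕏) (u : Fin k → 𝕏) :
    (fun j : Fin (m+1) => extw (Fin.cons a u : Fin (k+1) → 𝕏) j)
      = Fin.cons a (fun j : Fin m => extw u j) := by
  funext j
  refine Fin.cases ?_ (fun j => ?_) j
  · simp [extw]
  · simp only [extw, Fin.val_succ, Fin.cons_succ]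
    by_cases h : (j : ℕ) < k
    · rw [dif_pos h, dif_pos (by omega)]
      exact Fin.cons_succ (α := fun _ => 𝕏) a u ⟨j, h⟩
    · rw [dif_neg h, dif_neg (by omega)]

theorem qk_sum {m : ℕ} {κ : (Fin (m+1) → 𝕏) → ℝ} (hκ : ∀ w, 0 < κ w)
    (hs : ∀ u : Fin m → 𝕏, ∑ a, κ (Fin.cons a u) ≤ 1) (k : ℕ) : ∑ w, qk κ k w ≤ 1 := by
  induction k with
  | zero => simp [qk]
  | succ k ih =>
    rw [sum_cons]
    refine le_trans (Finset.sum_le_sum fun u _ => ?_) ih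
    simp only [qk, extw_cons, Fin.tail_cons]
    rw [← Finset.sum_mul]
    exact mul_le_of_le_one_left (qk_pos hκ k u).le (hs _)

theorem extw_blk {m k s : ℕ} (h : m ≤ k) (ω : ℤ → 𝕏) :
    (fun j : Fin (m+1) => extw (blk s (k+1) ω) j) = blk s (m+1) ω := by
  funext j
  rw [extw, dif_pos (by omega)]
  rfl

theorem tail_blk (s l : ℕ) (ω : ℤ → 𝕏) : Fin.tail (blk s (l+1) ω) = blk (s+1) l ω := by
  funext i
  simp only [Fin.tail, blk, Fin.val_succ]
  congr 1; push_cast; ring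

theorem qk_log {m : ℕ} {κ : (Fin (m+1) → 𝕏) → ℝ} (hκ : ∀ w, 0 < κ w) (h1 : ∀ w, κ w ≤ 1)
    {C : ℝ} (hC : ∀ w, -Real.logb 2 (κ w) ≤ C) (ω : ℤ → 𝕏) (k s : ℕ) :
    -Real.logb 2 (qk κ k (blk s k ω)) ≤
      birkhoffSum shift (fun ω => -Real.logb 2 (κ (blk 0 (m+1) ω))) k (shift^[s] ω)
        + (min k m : ℕ) * C := by
  have hC0 : 0 ≤ C := by
    refine le_trans ?_ (hC (fun _ => Classical.arbitrary 𝕏))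
    have := Real.logb_nonpos (b := 2) (by norm_num) (hκ (fun _ => Classical.arbitrary 𝕏)).le (h1 _)
    linarith
  induction k generalizing s with
  | zero => simp [qk]
  | succ k ih =>
    rw [qk, Real.logb_mul (hκ _).ne' (qk_pos hκ _ _).ne', birkhoffSum_succ', tail_blk]
    have h3 := ih (s+1)
    rw [Function.iterate_succ_apply'] at h3
    rw [blk_shift0]
    by_cases hm : m ≤ k
    · rw [extw_blk hm]
      rw [min_eq_right hm] at h3
      rw [min_eq_right (by omega)]
      linarith
    · rw [min_eq_left (by omega)] at h3
      rw [min_eq_left (by omega)]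
      have h4 := hC (fun j : Fin (m+1) => extw (blk s (k+1) ω) j)
      have h5 : 0 ≤ -Real.logb 2 (κ (blk s (m+1) ω)) := by
        have := Real.logb_nonpos (b := 2) (by norm_num) (hκ (blk s (m+1) ω)).le (h1 _)
        linarith
      push_cast
      linarith

theorem birk_blocks (g : (ℤ → 𝕏) → ℝ) (k M : ℕ) (ω : ℤ → 𝕏) :
    ∑ i ∈ Finset.range M, birkhoffSum shift g k (shift^[i*k] ω) = birkhoffSum shift g (M*k) ω := by
  induction M with
  | zero => simp
  | succ M ih =>
    rw [Finset.sum_range_succ, ih, add_mul, one_mul, birkhoffSum_add]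

/-- Smoothed backward conditional probability. -/
noncomputable def kap (μ : Measure (ℤ → 𝕏)) (m : ℕ) (η : ℝ) (w : Fin (m+1) → 𝕏) : ℝ :=
  (1-η) * (pblock μ (m+1) w / pblock μ m (Fin.tail w)) + η / Fintype.card 𝕏

theorem kap_ge {m : ℕ} {η : ℝ} (h1 : η < 1) (w : Fin (m+1) → 𝕏) :
    η / Fintype.card 𝕏 ≤ kap μ m η w := by
  have : 0 ≤ (1-η) * (pblock μ (m+1) w / pblock μ m (Fin.tail w)) :=
    mul_nonneg (by linarith) (div_nonneg (pblock_nonneg _ _) (pblock_nonneg _ _))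
  rw [kap]; linarith

theorem kap_sum (hmp : MeasurePreserving shift μ μ) {m : ℕ} {η : ℝ} (h1 : η < 1)
    (u : Fin m → 𝕏) : ∑ a, kap μ m η (Fin.cons a u) ≤ 1 := by
  simp only [kap, Fin.tail_cons]
  rw [Finset.sum_add_distrib, ← Finset.mul_sum, ← Finset.sum_div, marg_cons hmp]
  have h2 : pblock μ m u / pblock μ m u ≤ 1 := div_self_le_one _
  have h3 : ∑ a : 𝕏, η / (Fintype.card 𝕏 : ℝ) = η := by
    rw [Finset.sum_const, nsmul_eq_mul, Finset.card_univ]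
    field_simp
  rw [h3]
  nlinarith

theorem kap_le (hmp : MeasurePreserving shift μ μ) {m : ℕ} {η : ℝ} (h0 : 0 < η) (h1 : η < 1)
    (w : Fin (m+1) → 𝕏) : kap μ m η w ≤ 1 := by
  refine le_trans ?_ (kap_sum hmp h1 (Fin.tail w))
  conv_lhs => rw [← Fin.cons_self_tail w]
  refine Finset.single_le_sum (f := fun a => kap μ m η (Fin.cons a (Fin.tail w)))
    (fun a _ => ?_) (Finset.mem_univ (w 0))
  exact le_trans (by positivity) (kap_ge h1 _)

theorem kap_int (hmp : MeasurePreserving shift μ μ) {m : ℕ} {η : ℝ} (h0 : 0 < η) (h1 : η < 1) :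
    ∫ ω, -Real.logb 2 (kap μ m η (blk 0 (m+1) ω)) ∂μ
      ≤ -Real.logb 2 (1-η) + (Hblock μ (m+1) - Hblock μ m) := by
  rw [← Yr_log hmp m]
  have h2 : ∫ ω, (-Real.logb 2 (1-η) + Real.logb 2 (Yr μ m ω)) ∂μ =
      -Real.logb 2 (1-η) + ∫ ω, Real.logb 2 (Yr μ m ω) ∂μ := by
    rw [integral_add (integrable_const _) (Yr_log_int m)]
    simp
  rw [← h2]
  refine integral_mono_ae (integrable_blk 0 (m+1) fun w => -Real.logb 2 (kap μ m η w))
    ((integrable_const _).add (Yr_log_int m)) ?_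
  filter_upwards [ae_Yr_ge_one hmp m] with ω hω
  have hY : 0 < Yr μ m ω := by linarith
  have h3 : (1-η) / Yr μ m ω ≤ kap μ m η (blk 0 (m+1) ω) := by
    rw [kap, Yr, blk_tail, div_div_eq_mul_div, mul_div_assoc]
    have : 0 ≤ η / (Fintype.card 𝕏 : ℝ) := by positivity
    linarith
  have h4 := Real.logb_le_logb_of_le (b := 2) (by norm_num) (div_pos (by linarith) hY) h3
  rw [Real.logb_div (by linarith) hY.ne'] at h4
  linarith

theorem exists_code (herg : Ergodic shift μ) {h : ℝ}
    (hrate : Tendsto (fun k => Hblock μ k / k) atTop (nhds h)) {δ : ℝ} (hδ : 0 < δ) :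
    ∃ q : (k : ℕ) → (Fin k → 𝕏) → ℝ, (∀ k w, 0 < q k w) ∧ (∀ k, ∑ w, q k w ≤ 1) ∧
      ∀ᵐ ω ∂μ, ∃ K : ℕ, ∀ k ≥ K, ∀ M : ℕ, K ≤ M * k → ∀ I ⊆ Finset.range M,
        ∑ i ∈ I, -Real.logb 2 (q k (blk (i*k) k ω)) ≤ I.card * (k * (h+δ)) + M * (k * δ) := by
  have hmp := herg.toMeasurePreserving
  obtain ⟨m, hm⟩ := exists_incr_le hrate (half_pos hδ)
  obtain ⟨η, h0, h1, hη⟩ : ∃ η : ℝ, 0 < η ∧ η < 1 ∧ -Real.logb 2 (1-η) = δ/2 := by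
    refine ⟨1 - 2^(-(δ/2)), ?_, ?_, ?_⟩
    · have := Real.rpow_lt_one_of_one_lt_of_neg (x := 2) (z := -(δ/2)) (by norm_num) (by linarith)
      linarith
    · have := Real.rpow_pos_of_pos (x := 2) (by norm_num) (-(δ/2))
      linarith
    · rw [sub_sub_cancel, Real.logb_rpow (by norm_num) (by norm_num)]
      ring
  set κ := kap μ m η with hκdef
  have hc0 : 0 < η / (Fintype.card 𝕏 : ℝ) := by
    have : 0 < Fintype.card 𝕏 := Fintype.card_pos
    positivity
  have hκ : ∀ w, 0 < κ w := fun w => hc0.trans_le (kap_ge h1 w)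
  have hκ1 : ∀ w, κ w ≤ 1 := kap_le hmp h0 h1
  set C := -Real.logb 2 (η / (Fintype.card 𝕏 : ℝ)) with hCdef
  have hκC : ∀ w, -Real.logb 2 (κ w) ≤ C := fun w =>
    neg_le_neg (Real.logb_le_logb_of_le (by norm_num) hc0 (kap_ge h1 w))
  have hκ0 : ∀ w, 0 ≤ -Real.logb 2 (κ w) := fun w => by
    have := Real.logb_nonpos (b := 2) (by norm_num) (hκ w).le (hκ1 w)
    linarith
  have hC0 : 0 ≤ C := (hκ0 (fun _ => Classical.arbitrary 𝕏)).trans (hκC _)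
  set f : (ℤ → 𝕏) → ℝ := fun ω => -Real.logb 2 (κ (blk 0 (m+1) ω)) with hf
  have hfm : Measurable f :=
    (Measurable.of_discrete (f := fun w => -Real.logb 2 (κ w))).comp (meas_blk 0 (m+1))
  have hfb : ∀ ω, |f ω| ≤ C := fun ω => by
    rw [abs_of_nonneg (hκ0 _)]; exact hκC _
  have hF : ∫ ω, f ω ∂μ ≤ h + δ := by
    have := kap_int hmp (m := m) h0 h1
    rw [hη] at this
    linarith
  obtain ⟨L, hL, hLd⟩ := exists_devF_small herg hfm hfb hC0 (half_pos hδ)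
  have hdm : Measurable (devF shift f (∫ ω, f ω ∂μ) L) := by
    unfold devF
    have := birkhoffSum_meas hmp.measurable hfm L
    fun_prop
  have hup := birk_upper herg hdm (devF_bdd hfb hC0 _ L) hLd
  refine ⟨qk κ, qk_pos hκ, qk_sum hκ (kap_sum hmp h1), ?_⟩
  obtain ⟨K1, hK1⟩ := exists_nat_ge ((L + m) * C / (δ/2))
  filter_upwards [hup] with ω hω
  obtain ⟨K2, hK2⟩ := eventually_atTop.1 hω
  refine ⟨max K1 K2, fun k hk M hM I hI => ?_⟩
  have hk1 : (L + m) * C ≤ k * (δ/2) := by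
    rw [div_le_iff₀ (half_pos hδ)] at hK1
    refine hK1.trans ?_
    have : (K1:ℝ) ≤ k := by exact_mod_cast (le_max_left _ _).trans hk
    gcongr
  have hN := hK2 (M*k) ((le_max_right _ _).trans hM)
  have hstep : ∀ i ∈ I, -Real.logb 2 (qk κ k (blk (i*k) k ω)) ≤
      (k * (h+δ) + k * (δ/2)) +
        birkhoffSum shift (devF shift f (∫ ω, f ω ∂μ) L) k (shift^[i*k] ω) := by
    intro i _
    have e1 := qk_log hκ hκ1 hκC ω k (i*k)
    have e2 := birk_le_dev (T := shift) (f := f) (fun ω => hκ0 _) (fun ω => hκC _)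
      (∫ ω, f ω ∂μ) hL k (shift^[i*k] ω)
    have e3 : ((min k m : ℕ) : ℝ) * C ≤ m * C := by
      gcongr; exact min_le_right _ _
    have e4 : (k:ℝ) * ∫ ω, f ω ∂μ ≤ k * (h+δ) := by gcongr
    linarith
  have hsum := Finset.sum_le_sum hstep
  rw [Finset.sum_add_distrib, Finset.sum_const, nsmul_eq_mul] at hsum
  have hsub : ∑ i ∈ I, birkhoffSum shift (devF shift f (∫ ω, f ω ∂μ) L) k (shift^[i*k] ω)
      ≤ birkhoffSum shift (devF shift f (∫ ω, f ω ∂μ) L) (M*k) ω := by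
    rw [← birk_blocks]
    refine Finset.sum_le_sum_of_subset_of_nonneg hI fun i _ _ => ?_
    exact Finset.sum_nonneg fun j _ => abs_nonneg _
  have hcard : (I.card : ℝ) ≤ M := by
    exact_mod_cast (Finset.card_le_card hI).trans (Finset.card_range M).le
  have h9 : (I.card : ℝ) * (k * (δ/2)) ≤ M * (k * (δ/2)) := by gcongr
  push_cast at hN
  nlinarith

end Code

section Counting

/-- Mixture of the uniform weight on the range of `b` and `q`. -/
noncomputable def rmix {A : Type*} [Fintype A] [DecidableEq A] {β : ℕ} (b : Fin β → A) (q : A → ℝ)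
    (w : A) : ℝ := (1/2) * ((∑ j, if b j = w then (1:ℝ) else 0) / β + q w)

theorem rmix_nonneg {A : Type*} [Fintype A] [DecidableEq A] {β : ℕ} (b : Fin β → A) {q : A → ℝ}
    (hq : ∀ w, 0 < q w) (w : A) : 0 < rmix b q w := by
  have h1 : 0 ≤ ∑ j, (if b j = w then (1:ℝ) else 0) :=
    Finset.sum_nonneg fun j _ => by split_ifs <;> norm_num
  have := hq w
  unfold rmix
  positivity

theorem rmix_sum {A : Type*} [Fintype A] [DecidableEq A] {β : ℕ} (b : Fin β → A) {q : A → ℝ}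
    (hs : ∑ w, q w ≤ 1) : ∑ w, rmix b q w ≤ 1 := by
  unfold rmix
  rw [← Finset.mul_sum, Finset.sum_add_distrib, ← Finset.sum_div, Finset.sum_comm]
  simp only [Finset.sum_ite_eq, Finset.mem_univ, if_true, Finset.sum_const, nsmul_eq_mul,
    Finset.card_univ, Fintype.card_fin, mul_one]
  have : (β:ℝ)/β ≤ 1 := div_self_le_one _
  linarith

theorem rmix_prod_sum {A : Type*} [Fintype A] [DecidableEq A] {β : ℕ} (b : Fin β → A) {q : A → ℝ}
    (hq : ∀ w, 0 < q w) (hs : ∑ w, q w ≤ 1) (M : ℕ) :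
    ∑ x : Fin M → A, ∏ i, rmix b q (x i) ≤ 1 := by
  rw [← Fintype.sum_pow]
  exact pow_le_one₀ (Finset.sum_nonneg fun w _ => (rmix_nonneg b hq w).le) (rmix_sum b hs)

theorem rmix_log_mem {A : Type*} [Fintype A] [DecidableEq A] {β : ℕ} {b : Fin β → A} {q : A → ℝ}
    (hq : ∀ w, 0 < q w) {t : ℝ} (ht : (β:ℝ) ≤ 2 ^ t) {w : A} (hw : w ∈ Set.range b) :
    -1 - t ≤ Real.logb 2 (rmix b q w) := by
  obtain ⟨j, hj⟩ := hw
  have hβ : 0 < β := j.pos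
  have hβ' : (0:ℝ) < β := by exact_mod_cast hβ
  rw [Real.le_logb_iff_rpow_le (by norm_num) (rmix_nonneg b hq w)]
  have h1 : 1 ≤ ∑ j, (if b j = w then (1:ℝ) else 0) := by
    have := Finset.single_le_sum (f := fun j => if b j = w then (1:ℝ) else 0)
      (fun j _ => by split_ifs <;> norm_num) (Finset.mem_univ j)
    simpa [hj] using this
  have h2 := hq w
  have h3 : (2:ℝ)^(-t) ≤ 1 / β := by
    rw [Real.rpow_neg (by norm_num), ← one_div]
    exact one_div_le_one_div_of_le hβ' ht
  have h4 : 1 / (β:ℝ) ≤ (∑ j, if b j = w then (1:ℝ) else 0) / β := by gcongr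
  have h5 : (2:ℝ)^(-1 - t) = 1/2 * 2^(-t) := by
    rw [sub_eq_add_neg, Real.rpow_add (by norm_num), Real.rpow_neg_one]; norm_num
  rw [h5, rmix]
  linarith

theorem rmix_log_q {A : Type*} [Fintype A] [DecidableEq A] {β : ℕ} (b : Fin β → A) {q : A → ℝ}
    (hq : ∀ w, 0 < q w) (w : A) :
    -1 + Real.logb 2 (q w) ≤ Real.logb 2 (rmix b q w) := by
  have h1 : 0 ≤ (∑ j, (if b j = w then (1:ℝ) else 0)) / β :=
    div_nonneg (Finset.sum_nonneg fun j _ => by split_ifs <;> norm_num) (Nat.cast_nonneg _)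
  have h2 : 1/2 * q w ≤ rmix b q w := by unfold rmix; linarith
  have h3 := Real.logb_le_logb_of_le (b := 2) (by norm_num) (by linarith [hq w]) h2
  rw [Real.logb_mul (by norm_num) (hq w).ne', one_div, Real.logb_inv,
    Real.logb_self_eq_one (by norm_num)] at h3
  linarith

theorem count_bound {A : Type*} [Fintype A] [DecidableEq A] {β M k : ℕ} {b : Fin β → A} {q : A → ℝ}
    (hq : ∀ w, 0 < q w) {h γ δ : ℝ} (hγ : 0 < γ) (hδ : δ = γ^2/8) (hk : 1 ≤ k * δ)
    (hβ : (β:ℝ) ≤ 2 ^ (k * (h-γ))) (x : Fin M → A)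
    (I : Finset (Fin M)) (hI : ∀ i ∈ I, x i ∈ Set.range b) (hIc : γ * M ≤ I.card)
    (hJ : ∑ i ∈ Iᶜ, -Real.logb 2 (q (x i)) ≤ Iᶜ.card * (k * (h+δ)) + M * (k * δ)) {pr : ℝ}
    (hpr : pr ≤ 2 ^ (-(((M * k : ℕ):ℝ) * (h - δ)))) :
    pr ≤ 2 ^ (-(M * k * (γ^2/4))) * ∏ i, rmix b q (x i) := by
  refine hpr.trans ?_
  have hpos : 0 < ∏ i, rmix b q (x i) := Finset.prod_pos fun i _ => rmix_nonneg b hq _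
  have e1 : ∏ i, rmix b q (x i) = 2 ^ (Real.logb 2 (∏ i, rmix b q (x i))) :=
    (Real.rpow_logb (by norm_num) (by norm_num) hpos).symm
  rw [e1, ← Real.rpow_add (by norm_num)]
  refine Real.rpow_le_rpow_of_exponent_le (by norm_num) ?_
  rw [Real.logb_prod _ _ (fun i _ => (rmix_nonneg b hq _).ne'), ← Finset.sum_add_sum_compl I]
  have h1 : I.card * (-1 - k * (h-γ)) ≤ ∑ i ∈ I, Real.logb 2 (rmix b q (x i)) := by
    rw [← nsmul_eq_mul]
    exact Finset.card_nsmul_le_sum _ _ _ fun i hi => rmix_log_mem hq hβ (hI i hi)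
  have h2 : ∑ i ∈ Iᶜ, (-1 + Real.logb 2 (q (x i))) ≤ ∑ i ∈ Iᶜ, Real.logb 2 (rmix b q (x i)) :=
    Finset.sum_le_sum fun i _ => rmix_log_q b hq _
  rw [Finset.sum_add_distrib, Finset.sum_const, nsmul_eq_mul] at h2
  rw [Finset.sum_neg_distrib] at hJ
  have h3 : (I.card : ℝ) + (Iᶜ.card : ℝ) = M := by
    have := Finset.card_add_card_compl I
    rw [Fintype.card_fin] at this
    exact_mod_cast this
  have hJc : (Iᶜ.card : ℝ) = M - I.card := by linarith
  rw [hJc] at h2 hJ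
  have hδ0 : 0 ≤ δ := by rw [hδ]; positivity
  have hM0 : (0:ℝ) ≤ M := Nat.cast_nonneg _
  have hk0 : (0:ℝ) ≤ k := Nat.cast_nonneg _
  have hI0 : (0:ℝ) ≤ I.card := Nat.cast_nonneg _
  push_cast
  set c : ℝ := (I.card : ℝ)
  set m : ℝ := (M : ℝ)
  set K : ℝ := (k : ℝ)
  have h4 : m ≤ m * (K * δ) := by nlinarith
  have h5 : γ * m * (K * γ) ≤ c * (K * γ) :=
    mul_le_mul_of_nonneg_right hIc (mul_nonneg hk0 hγ.le)
  have h6 : 0 ≤ c * (K * δ) := mul_nonneg hI0 (mul_nonneg hk0 hδ0)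
  have h7 : m * K * (γ^2/4) = 2 * (m * K * δ) := by rw [hδ]; ring
  have h8 : γ * m * (K * γ) = 8 * (m * K * δ) := by rw [hδ]; ring
  have h9 : m * (K * δ) = m * K * δ := by ring
  nlinarith

end Counting

section Bad

variable {μ : Measure (ℤ → 𝕏)} [IsProbabilityMeasure μ]

/-- The tuple of nonoverlapping blocks. -/
def tup (k M : ℕ) (ω : ℤ → 𝕏) : Fin M → (Fin k → 𝕏) := fun i => blk (i * k) k ω

theorem tup_meas (k M : ℕ) : Measurable (tup k M : (ℤ → 𝕏) → _) :=
  measurable_pi_iff.2 fun _ => meas_blk _ _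

theorem tup_prob (k M : ℕ) (ω : ℤ → 𝕏) :
    (μ {ω' | tup k M ω' = tup k M ω}).toReal ≤ Pk μ (M*k) 0 ω := by
  unfold Pk pblock
  refine ENNReal.toReal_mono (measure_ne_top _ _) (measure_mono fun ω' hω' => ?_)
  simp only [Set.mem_ofPred_eq] at hω' ⊢
  funext i
  have hk : 0 < k := by
    rcases Nat.eq_zero_or_pos k with h | h
    · subst h; exact absurd i.2 (by simp)
    · exact h
  have hi : (i:ℕ) / k < M := by
    rw [Nat.div_lt_iff_lt_mul hk]; exact i.2
  have := congrFun (congrFun hω' ⟨(i:ℕ)/k, hi⟩) ⟨(i:ℕ) % k, Nat.mod_lt _ hk⟩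
  simp only [tup, blk] at this ⊢
  have e : (((i:ℕ)/k * k : ℕ) : ℤ) + 1 + (((i:ℕ) % k : ℕ) : ℤ) = ((0:ℕ):ℤ) + 1 + ((i:ℕ):ℤ) := by
    have h2 : (i:ℕ)/k * k + (i:ℕ) % k = i := Nat.div_add_mod' _ _
    have h3 : ((((i:ℕ)/k * k + (i:ℕ) % k : ℕ)) : ℤ) = ((i:ℕ):ℤ) := by rw [h2]
    push_cast at h3 ⊢
    linarith
  rw [e] at this
  exact this

open Classical in
/-- Bad tuples for the list `b`. -/
def badT (μ : Measure (ℤ → 𝕏)) {k M β : ℕ} (q : (Fin k → 𝕏) → ℝ) (h γ δ : ℝ)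
    (b : Fin β → (Fin k → 𝕏)) : Set (Fin M → (Fin k → 𝕏)) :=
  {x | ∃ I : Finset (Fin M), (∀ i ∈ I, x i ∈ Set.range b) ∧ γ * M ≤ I.card ∧
    ∑ i ∈ Iᶜ, -Real.logb 2 (q (x i)) ≤ Iᶜ.card * (k * (h+δ)) + M * (k * δ) ∧
    (μ {ω | tup k M ω = x}).toReal ≤ 2 ^ (-(((M * k : ℕ):ℝ) * (h - δ)))}

theorem badT_measure {k M β : ℕ} {q : (Fin k → 𝕏) → ℝ} (hq : ∀ w, 0 < q w) (hs : ∑ w, q w ≤ 1)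
    {h γ δ : ℝ} (hγ : 0 < γ) (hδ : δ = γ^2/8) (hk : 1 ≤ k * δ)
    (hβ : (β:ℝ) ≤ 2 ^ (k * (h-γ))) (b : Fin β → (Fin k → 𝕏)) :
    μ {ω | tup k M ω ∈ badT μ q h γ δ b} ≤ ENNReal.ofReal (2 ^ (-(M * k * (γ^2/4)))) := by
  classical
  set G : Finset (Fin M → (Fin k → 𝕏)) := (badT μ q h γ δ b).toFinset
  have h1 : {ω | tup k M ω ∈ badT μ q h γ δ b} ⊆ ⋃ x ∈ G, {ω | tup k M ω = x} := by
    intro ω hω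
    simp only [Set.mem_iUnion]
    exact ⟨tup k M ω, by simpa [G] using hω, rfl⟩
  refine (measure_mono h1).trans ((measure_biUnion_finset_le _ _).trans ?_)
  have h2 : ∀ x ∈ G, μ {ω | tup k M ω = x} ≤
      ENNReal.ofReal (2 ^ (-(M * k * (γ^2/4))) * ∏ i, rmix b q (x i)) := by
    intro x hx
    obtain ⟨I, hI1, hI2, hI3, hI4⟩ : x ∈ badT μ q h γ δ b := by simpa [G] using hx
    rw [← ENNReal.ofReal_toReal (measure_ne_top μ {ω | tup k M ω = x})]
    exact ENNReal.ofReal_le_ofReal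
      (count_bound hq hγ hδ hk hβ x I hI1 hI2 (by convert hI3) hI4)
  refine (Finset.sum_le_sum h2).trans ?_
  have hnn : ∀ x : Fin M → (Fin k → 𝕏), 0 ≤ ∏ i, rmix b q (x i) := fun x =>
    Finset.prod_nonneg fun i _ => (rmix_nonneg b hq _).le
  rw [← ENNReal.ofReal_sum_of_nonneg fun x _ => mul_nonneg (by positivity) (hnn x),
    ← Finset.mul_sum]
  refine ENNReal.ofReal_le_ofReal (mul_le_of_le_one_right (by positivity) ?_)
  refine le_trans ?_ (rmix_prod_sum b hq hs M)
  exact Finset.sum_le_sum_of_subset_of_nonneg (Finset.subset_univ _) fun x _ _ => hnn x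

theorem badT_union {k M β : ℕ} {q : (Fin k → 𝕏) → ℝ} (hq : ∀ w, 0 < q w) (hs : ∑ w, q w ≤ 1)
    {h γ δ : ℝ} (hγ : 0 < γ) (hδ : δ = γ^2/8) (hk : 1 ≤ k * δ)
    (hβ : (β:ℝ) ≤ 2 ^ (k * (h-γ)))
    (hfin : k + k * β * Real.logb 2 (Fintype.card 𝕏) ≤ M * k * (γ^2/4)) :
    μ {ω | ∃ b : Fin β → (Fin k → 𝕏), tup k M ω ∈ badT μ q h γ δ b} ≤ (2⁻¹ : ENNReal) ^ k := by
  have h1 : {ω | ∃ b : Fin β → (Fin k → 𝕏), tup k M ω ∈ badT μ q h γ δ b} ⊆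
      ⋃ b : Fin β → (Fin k → 𝕏), {ω | tup k M ω ∈ badT μ q h γ δ b} := by
    intro ω hω
    simpa using hω
  refine (measure_mono h1).trans ((measure_iUnion_fintype_le _ _).trans ?_)
  refine (Finset.sum_le_sum fun b _ => badT_measure hq hs hγ hδ hk hβ b).trans ?_
  have hc : (0:ℝ) < Fintype.card 𝕏 := by exact_mod_cast Fintype.card_pos
  rw [Finset.sum_const, nsmul_eq_mul, Finset.card_univ, Fintype.card_fun, Fintype.card_fun,
    Fintype.card_fin, Fintype.card_fin, ← ENNReal.ofReal_natCast,
    ← ENNReal.ofReal_mul (by positivity)]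
  have h2 : (2⁻¹ : ENNReal) ^ k = ENNReal.ofReal (2 ^ (-(k:ℝ))) := by
    rw [Real.rpow_neg (by norm_num), Real.rpow_natCast, ENNReal.ofReal_inv_of_pos (by positivity),
      ENNReal.ofReal_pow (by norm_num), ENNReal.inv_pow]
    norm_num
  rw [h2]
  refine ENNReal.ofReal_le_ofReal ?_
  have h3 : (((Fintype.card 𝕏 ^ k) ^ β : ℕ) : ℝ) =
      2 ^ (k * β * Real.logb 2 (Fintype.card 𝕏)) := by
    rw [mul_comm, Real.rpow_mul (by norm_num), Real.rpow_logb (by norm_num) (by norm_num) hc,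
      ← pow_mul]
    push_cast
    rw [← Real.rpow_natCast]
    push_cast
    rfl
  rw [h3, ← Real.rpow_add (by norm_num)]
  exact Real.rpow_le_rpow_of_exponent_le (by norm_num) (by linarith)

theorem ev_lin_le_exp {ε : ℝ} (hε : 0 < ε) (c : ℝ) :
    ∀ᶠ k : ℕ in atTop, (k:ℝ) * c ≤ 2 ^ ((k:ℝ) * ε) := by
  have hr : |(2:ℝ)^(-ε)| < 1 := by
    rw [abs_of_pos (by positivity)]
    exact Real.rpow_lt_one_of_one_lt_of_neg (by norm_num) (by linarith)
  have h1 := (tendsto_pow_const_mul_const_pow_of_abs_lt_one 1 hr).mul_const c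
  rw [zero_mul] at h1
  filter_upwards [h1.eventually_lt_const one_pos] with k hk
  rw [pow_one, ← Real.rpow_natCast, ← Real.rpow_mul (by norm_num)] at hk
  have h2 : (2:ℝ)^((k:ℝ)*ε) * 2 ^ (-ε * k) = 1 := by
    rw [← Real.rpow_add (by norm_num)]
    have : (k:ℝ) * ε + -ε * k = 0 := by ring
    rw [this, Real.rpow_zero]
  have h3 : (0:ℝ) < 2 ^ ((k:ℝ)*ε) := by positivity
  calc (k:ℝ) * c = 2^((k:ℝ)*ε) * (k * 2 ^ (-ε * k) * c) := by
        linear_combination (-(k:ℝ) * c) * h2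
    _ ≤ 2^((k:ℝ)*ε) * 1 := by gcongr
    _ = _ := mul_one _

theorem few_covered (herg : Ergodic shift μ) {h : ℝ}
    (hrate : Tendsto (fun k => Hblock μ k / k) atTop (nhds h))
    {ε : ℝ} (hε : 0 < ε) {n : ℕ → ℕ}
    (hn : ∀ k : ℕ, (2 : ℝ) ^ ((k : ℝ) * (h + ε)) ≤ (n k : ℝ)) {γ : ℝ} (hγ : 0 < γ) (hγh : γ < h) :
    ∀ᵐ ω ∂μ, ∀ᶠ k : ℕ in atTop, 0 < n k / k ∧
      ∀ b : Fin ⌊(2:ℝ) ^ (k * (h-γ))⌋₊ → (Fin k → 𝕏), ∀ I : Finset (Fin (n k / k)),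
        (∀ i ∈ I, blk (i*k) k ω ∈ Set.range b) → (I.card : ℝ) < γ * (n k / k : ℕ) := by
  classical
  set δ : ℝ := γ^2/8 with hδ
  have hδ0 : 0 < δ := by positivity
  obtain ⟨q, hq, hs, hcode⟩ := exists_code herg hrate hδ0
  set D := Real.logb 2 (Fintype.card 𝕏) with hD
  have hD0 : 0 ≤ D := Real.logb_nonneg (by norm_num) (by exact_mod_cast Fintype.card_pos)
  -- growth of the sample size
  have hE : ∀ k : ℕ, (1:ℝ) ≤ 2 ^ ((k:ℝ)*h) := fun k =>
    Real.one_le_rpow (by norm_num) (mul_nonneg (Nat.cast_nonneg _) (by linarith))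
  have hNn : ∀ k : ℕ, 0 < k → (2:ℝ) ^ ((k:ℝ)*h) * 2 ^ ((k:ℝ)*ε) - k ≤ ((n k / k : ℕ) : ℝ) * k := by
    intro k hk
    have h1 := hn k
    rw [mul_add, Real.rpow_add (by norm_num)] at h1
    have h2 : n k ≤ n k / k * k + k := by
      have := Nat.div_add_mod' (n k) k
      have := Nat.mod_lt (n k) hk
      omega
    have h3 : (n k : ℝ) ≤ ((n k / k : ℕ) : ℝ) * k + k := by exact_mod_cast h2
    linarith
  have hev1 : ∀ᶠ k : ℕ in atTop, 0 < k ∧ (k:ℝ) ≤ ((n k / k : ℕ) : ℝ) * k := by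
    filter_upwards [ev_lin_le_exp hε 2, eventually_gt_atTop 0] with k h1 h0
    refine ⟨h0, ?_⟩
    have := hNn k h0
    have := hE k
    have : (2:ℝ) ^ ((k:ℝ)*ε) ≤ (2:ℝ) ^ ((k:ℝ)*h) * 2 ^ ((k:ℝ)*ε) :=
      le_mul_of_one_le_left (by positivity) (hE k)
    linarith
  have hβ : ∀ k : ℕ, ((⌊(2:ℝ) ^ (k * (h-γ))⌋₊ : ℕ) : ℝ) ≤ 2 ^ (k * (h-γ)) := fun k =>
    Nat.floor_le (by positivity)
  have hev2 : ∀ᶠ k : ℕ in atTop, k + k * (⌊(2:ℝ) ^ (k * (h-γ))⌋₊ : ℕ) * D ≤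
      ((n k / k : ℕ) : ℝ) * k * (γ^2/4) := by
    filter_upwards [ev_lin_le_exp hε ((1 + D + γ^2/4)/(γ^2/4)), eventually_gt_atTop 0] with k h1 h0
    have h2 := hNn k h0
    have h3 := hE k
    have hg : 0 < γ^2/4 := by positivity
    rw [← mul_div_assoc, div_le_iff₀ hg] at h1
    have h4 : ((⌊(2:ℝ) ^ (k * (h-γ))⌋₊ : ℕ) : ℝ) ≤ 2 ^ ((k:ℝ) * h) :=
      (hβ k).trans (Real.rpow_le_rpow_of_exponent_le (by norm_num) (by
        have : (0:ℝ) ≤ k := Nat.cast_nonneg k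
        nlinarith))
    have hk0 : (0:ℝ) ≤ k := Nat.cast_nonneg k
    set E := (2:ℝ) ^ ((k:ℝ)*h)
    set F := (2:ℝ) ^ ((k:ℝ)*ε)
    set B := ((⌊(2:ℝ) ^ (k * (h-γ))⌋₊ : ℕ) : ℝ)
    set N := ((n k / k : ℕ) : ℝ) * k
    have h5 : (k:ℝ) * B * D ≤ k * E * D := by gcongr
    have h6 : (E * F - k) * (γ^2/4) ≤ N * (γ^2/4) := by gcongr
    have h7 : E * (k * (1 + D + γ^2/4)) ≤ E * (F * (γ^2/4)) := by gcongr
    have h8 : (k:ℝ) ≤ E * k := le_mul_of_one_le_left hk0 h3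
    have h9 : (k:ℝ) * (γ^2/4) ≤ E * k * (γ^2/4) := by gcongr
    nlinarith
  have hev3 : ∀ᶠ k : ℕ in atTop, 1 ≤ k * δ := by
    obtain ⟨K, hK⟩ := exists_nat_ge (1/δ)
    filter_upwards [eventually_ge_atTop K] with k hk
    rw [div_le_iff₀ hδ0] at hK
    have : (K:ℝ) ≤ k := by exact_mod_cast hk
    nlinarith
  have hbc := bc_geom (μ := μ) (r := 2⁻¹)
    (A := fun k => {ω | ∃ b : Fin ⌊(2:ℝ) ^ (k * (h-γ))⌋₊ → (Fin k → 𝕏),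
      tup k (n k / k) ω ∈ badT μ (q k) h γ δ b}) (by simp) (by
    filter_upwards [hev2, hev3] with k h2 h3
    exact badT_union (hq k) (hs k) hγ hδ h3 (hβ k) h2)
  filter_upwards [hcode, smb_lower herg hrate hδ0, hbc] with ω hω1 hω2 hω3
  obtain ⟨K1, hK1⟩ := hω1
  obtain ⟨K2, hK2⟩ := eventually_atTop.1 hω2
  filter_upwards [hω3, hev1, eventually_ge_atTop K1, eventually_ge_atTop K2] with k h3 h1 hk1 hk2
  have hN : k ≤ n k / k * k := by exact_mod_cast h1.2
  have hM : 0 < n k / k := by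
    rcases Nat.eq_zero_or_pos (n k / k) with h | h
    · rw [h] at hN; omega
    · exact h
  refine ⟨hM, fun b I hI => ?_⟩
  by_contra hcon
  rw [not_lt] at hcon
  apply h3
  refine ⟨b, I, hI, hcon, ?_, ?_⟩
  · have := hK1 k hk1 (n k / k) (hk1.trans hN) (Iᶜ.map Fin.valEmbedding) (by
      intro i hi
      rw [Finset.mem_map] at hi
      obtain ⟨j, _, rfl⟩ := hi
      exact Finset.mem_range.2 j.2)
    rw [Finset.sum_map, Finset.card_map] at this
    convert this
    rfl
  · exact (tup_prob k _ ω).trans (hK2 _ (hk2.trans hN))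

end Bad

section Final

theorem Hent_lower {A : Type*} [Fintype A] [DecidableEq A] {p : A → ℝ} (h0 : ∀ w, 0 ≤ p w)
    (h1 : ∑ w, p w = 1) {t γ : ℝ} (ht : 0 ≤ t)
    (hB : ∑ w ∈ Finset.univ.filter (fun w => 2 ^ (-t) < p w), p w ≤ γ) : (1-γ) * t ≤ Hent p := by
  have hle : ∀ w, p w ≤ 1 := fun w => by
    rw [← h1]; exact Finset.single_le_sum (fun i _ => h0 i) (Finset.mem_univ w)
  unfold Hent
  rw [← Finset.sum_neg_distrib]
  rw [← Finset.sum_filter_add_sum_filter_not _ (fun w => 2 ^ (-t) < p w)] at h1 ⊢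
  have e1 : 0 ≤ ∑ w ∈ Finset.univ.filter (fun w => 2 ^ (-t) < p w), -(p w * Real.logb 2 (p w)) := by
    refine Finset.sum_nonneg fun w _ => ?_
    have := Real.logb_nonpos (b := 2) (by norm_num) (h0 w) (hle w)
    nlinarith [h0 w]
  have e2 : ∑ w ∈ Finset.univ.filter (fun w => ¬ 2 ^ (-t) < p w), p w * t ≤
      ∑ w ∈ Finset.univ.filter (fun w => ¬ 2 ^ (-t) < p w), -(p w * Real.logb 2 (p w)) := by
    refine Finset.sum_le_sum fun w hw => ?_
    rw [Finset.mem_filter, not_lt] at hw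
    rcases (h0 w).eq_or_lt with h | h
    · rw [← h]; simp
    · have := (Real.logb_le_iff_le_rpow (b := 2) (by norm_num) h).2 hw.2
      nlinarith
  rw [← Finset.sum_mul] at e2
  have e3 : (1 - γ) * t ≤ (∑ w ∈ Finset.univ.filter (fun w => ¬ 2 ^ (-t) < p w), p w) * t := by
    gcongr; linarith
  linarith

theorem Hent_nonneg' {A : Type*} [Fintype A] {p : A → ℝ} (h0 : ∀ w, 0 ≤ p w)
    (h1 : ∀ w, p w ≤ 1) : 0 ≤ Hent p := by
  unfold Hent
  rw [← Finset.sum_neg_distrib]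
  refine Finset.sum_nonneg fun w _ => ?_
  have := Real.logb_nonpos (b := 2) (by norm_num) (h0 w) (h1 w)
  nlinarith [h0 w]

theorem Hent_upper {A : Type*} [Fintype A] [Nonempty A] {p : A → ℝ} (h0 : ∀ w, 0 ≤ p w)
    (h1 : ∑ w, p w ≤ 1) : Hent p ≤ (Real.log (Fintype.card A) + 1) / Real.log 2 := by
  have hl : 0 < Real.log 2 := Real.log_pos (by norm_num)
  have hc : (0:ℝ) < Fintype.card A := by exact_mod_cast Fintype.card_pos
  have hc1 : (1:ℝ) ≤ Fintype.card A := by exact_mod_cast Fintype.card_pos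
  have hlc : 0 ≤ Real.log (Fintype.card A) := Real.log_nonneg hc1
  rw [le_div_iff₀ hl]
  have e1 : Hent p * Real.log 2 = ∑ w, -(p w * Real.log (p w)) := by
    unfold Hent
    rw [← Finset.sum_neg_distrib, Finset.sum_mul]
    refine Finset.sum_congr rfl fun w _ => ?_
    rw [Real.logb]; field_simp
  rw [e1]
  have e2 : ∀ w, -(p w * Real.log (p w)) ≤ p w * Real.log (Fintype.card A) + 1 / Fintype.card A := by
    intro w
    rcases (h0 w).eq_or_lt with h | h
    · rw [← h]; simp
    · have h2 := Real.log_le_sub_one_of_pos (x := 1 / Fintype.card A / p w) (by positivity)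
      rw [Real.log_div (by positivity) h.ne', one_div, Real.log_inv] at h2
      have h3 := mul_le_mul_of_nonneg_left h2 h.le
      have h4 : p w * ((Fintype.card A : ℝ)⁻¹ / p w - 1) = (Fintype.card A : ℝ)⁻¹ - p w := by
        field_simp
      rw [h4] at h3
      rw [one_div]
      linarith
  refine (Finset.sum_le_sum fun w _ => e2 w).trans ?_
  rw [Finset.sum_add_distrib, ← Finset.sum_mul, Finset.sum_const, nsmul_eq_mul, Finset.card_univ,
    mul_one_div_cancel hc.ne']
  nlinarith

theorem empDist_nonneg (k n : ℕ) (ω : ℤ → 𝕏) (w : Fin k → 𝕏) : 0 ≤ empDist k n ω w := by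
  unfold empDist
  exact div_nonneg (Finset.sum_nonneg fun j _ => by split_ifs <;> norm_num) (Nat.cast_nonneg _)

theorem empDist_sum (k n : ℕ) (ω : ℤ → 𝕏) (B : Finset (Fin k → 𝕏)) :
    ∑ w ∈ B, empDist k n ω w =
      ((Finset.univ.filter fun i : Fin (n/k) => blk (i*k) k ω ∈ B).card : ℝ) / (n / k : ℕ) := by
  unfold empDist
  rw [← Finset.sum_div, Finset.sum_comm]
  congr 1
  simp only [Finset.sum_ite_eq]
  rw [Finset.sum_range, Finset.card_filter]
  push_cast
  rfl

theorem empDist_sum_univ_le (k n : ℕ) (ω : ℤ → 𝕏) : ∑ w, empDist k n ω w ≤ 1 := by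
  rw [empDist_sum]
  simp only [Finset.mem_univ, Finset.filter_true, Finset.card_univ, Fintype.card_fin]
  exact div_self_le_one _

theorem empDist_sum_univ (k n : ℕ) (h : 0 < n / k) (ω : ℤ → 𝕏) : ∑ w, empDist k n ω w = 1 := by
  rw [empDist_sum]
  simp only [Finset.mem_univ, Finset.filter_true, Finset.card_univ, Fintype.card_fin]
  exact div_self (by exact_mod_cast h.ne')

theorem plugIn_rate_le (k n : ℕ) (ω : ℤ → 𝕏) :
    plugIn k n ω / k ≤ (Real.log (Fintype.card 𝕏) + 1) / Real.log 2 := by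
  have hl : 0 < Real.log 2 := Real.log_pos (by norm_num)
  have hc1 : (1:ℝ) ≤ Fintype.card 𝕏 := by exact_mod_cast Fintype.card_pos
  have hlc : 0 ≤ Real.log (Fintype.card 𝕏) := Real.log_nonneg hc1
  rcases Nat.eq_zero_or_pos k with h | h
  · subst h
    simp only [Nat.cast_zero, div_zero]
    positivity
  · have hk : (1:ℝ) ≤ k := by exact_mod_cast h
    rw [div_le_iff₀ (by linarith)]
    refine (Hent_upper (empDist_nonneg k n ω) (empDist_sum_univ_le k n ω)).trans ?_
    rw [Fintype.card_fun, Fintype.card_fin, Nat.cast_pow, Real.log_pow, div_mul_eq_mul_div]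
    gcongr
    nlinarith

theorem plugIn_rate_nonneg (k n : ℕ) (ω : ℤ → 𝕏) : 0 ≤ plugIn k n ω / k := by
  refine div_nonneg (Hent_nonneg' (empDist_nonneg k n ω) fun w => ?_) (Nat.cast_nonneg _)
  exact (Finset.single_le_sum (fun i _ => empDist_nonneg k n ω i) (Finset.mem_univ w)).trans
    (empDist_sum_univ_le k n ω)

theorem exists_cover {A : Type*} [Nonempty A] (B : Finset A) {β : ℕ} (h : B.card ≤ β) :
    ∃ b : Fin β → A, ∀ w ∈ B, w ∈ Set.range b := by
  refine ⟨fun j => if hj : (j:ℕ) < B.card then (B.equivFin.symm ⟨j, hj⟩ : A)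
    else Classical.arbitrary A, fun w hw => ?_⟩
  refine ⟨⟨B.equivFin ⟨w, hw⟩, (B.equivFin ⟨w, hw⟩).2.trans_le h⟩, ?_⟩
  simp

theorem plugIn_lower {k n : ℕ} {ω : ℤ → 𝕏} {t γ : ℝ} (ht : 0 ≤ t) (hM : 0 < n / k)
    (hb : ∀ b : Fin ⌊(2:ℝ) ^ t⌋₊ → (Fin k → 𝕏), ∀ I : Finset (Fin (n / k)),
        (∀ i ∈ I, blk (i*k) k ω ∈ Set.range b) → (I.card : ℝ) < γ * (n / k : ℕ)) :
    (1-γ) * t ≤ plugIn k n ω := by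
  have hM' : (0:ℝ) < (n / k : ℕ) := by exact_mod_cast hM
  have hs := empDist_sum_univ k n hM ω
  refine Hent_lower (empDist_nonneg k n ω) hs ht ?_
  set B := Finset.univ.filter (fun w => 2 ^ (-t) < empDist k n ω w) with hBdef
  have hBc : B.card ≤ ⌊(2:ℝ)^t⌋₊ := by
    refine Nat.le_floor ?_
    have h1 : (B.card : ℝ) * 2 ^ (-t) ≤ ∑ w ∈ B, empDist k n ω w := by
      rw [← nsmul_eq_mul]
      exact Finset.card_nsmul_le_sum _ _ _ fun w hw => (Finset.mem_filter.1 hw).2.le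
    have h2 : ∑ w ∈ B, empDist k n ω w ≤ 1 := by
      rw [← hs]
      exact Finset.sum_le_sum_of_subset_of_nonneg (Finset.subset_univ _)
        fun w _ _ => empDist_nonneg k n ω w
    rw [Real.rpow_neg (by norm_num), ← div_eq_mul_inv] at h1
    have h3 := h1.trans h2
    rwa [div_le_one (by positivity)] at h3
  obtain ⟨b, hbB⟩ := exists_cover B hBc
  rw [empDist_sum, div_le_iff₀ hM']
  refine (hb b _ fun i hi => hbB _ ?_).le
  exact (Finset.mem_filter.1 hi).2

end Final

/-- For a stationary ergodic process with entropy rate `h`, any `ε > 0` and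
sample sizes `n(k) ≥ 2^{k(h+ε)}`, almost surely
`liminf_{k→∞} H(k, X_1^{n(k)})/k ≥ h`. -/
theorem plugIn_rate_liminf_ge_ae
    {μ : Measure (ℤ → 𝕏)} [IsProbabilityMeasure μ]
    (herg : Ergodic shift μ) (h : ℝ)
    (hrate : Tendsto (fun k => Hblock μ k / k) atTop (nhds h))
    (ε : ℝ) (hε : 0 < ε) (n : ℕ → ℕ)
    (hn : ∀ k : ℕ, (2 : ℝ) ^ ((k : ℝ) * (h + ε)) ≤ (n k : ℝ)) :
    ∀ᵐ ω ∂μ, h ≤ Filter.liminf (fun k => plugIn k (n k) ω / k) atTop := by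
  have hcob : ∀ ω : ℤ → 𝕏, IsCoboundedUnder (· ≥ ·) atTop (fun k => plugIn k (n k) ω / k) :=
    fun ω => IsBoundedUnder.isCoboundedUnder_ge
      (isBoundedUnder_of ⟨_, fun k => plugIn_rate_le k (n k) ω⟩)
  rcases le_or_gt h 0 with hh | hh
  · refine Eventually.of_forall fun ω => hh.trans ?_
    exact le_liminf_of_le (hcob ω) (Eventually.of_forall fun k => plugIn_rate_nonneg k (n k) ω)
  · have hg : ∀ j : ℕ, (0:ℝ) < 1 / ((j:ℝ)+1) := fun j => by positivity
    have hall : ∀ j : ℕ, ∀ᵐ ω ∂μ, 1 / ((j:ℝ)+1) < h →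
        (1 - 1 / ((j:ℝ)+1)) * (h - 1 / ((j:ℝ)+1)) ≤
          Filter.liminf (fun k => plugIn k (n k) ω / k) atTop := by
      intro j
      by_cases hj : 1 / ((j:ℝ)+1) < h
      · filter_upwards [few_covered herg hrate hε hn (hg j) hj] with ω hω _
        refine le_liminf_of_le (hcob ω) ?_
        filter_upwards [hω, eventually_gt_atTop 0] with k hk hk0
        have hk' : (0:ℝ) < k := by exact_mod_cast hk0
        have := plugIn_lower (t := k * (h - 1 / ((j:ℝ)+1)))
          (mul_nonneg hk'.le (by linarith)) hk.1 hk.2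
        rw [le_div_iff₀ hk']
        linarith
      · exact Eventually.of_forall fun ω h' => absurd h' hj
    filter_upwards [ae_all_iff.2 hall] with ω hω
    have hlim : Tendsto (fun j : ℕ => 1 / ((j:ℝ)+1)) atTop (nhds 0) :=
      tendsto_one_div_add_atTop_nhds_zero_nat
    have hlim2 : Tendsto (fun j : ℕ => (1 - 1 / ((j:ℝ)+1)) * (h - 1 / ((j:ℝ)+1))) atTop
        (nhds h) := by
      have := (hlim.const_sub 1).mul (hlim.const_sub h)
      simpa using this
    refine le_of_tendsto hlim2 ?_
    filter_upwards [hlim.eventually_lt_const hh] with j hj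
    exact hω j hj
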